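/- arXiv:2006.05511 — 2 statements merged into one kernel-verified Lean document; each statement's English description precedes it below -/
import Mathlib

section
/- If G is a connected well-covered unicyclic graph of order 2n with n ≥ 3, then ξ(C_n*) ≤ ξ(G) ≤ ξ(U_n*). -/
open Polynomial SimpleGraph

/-- A finset of vertices is independent: pairwise nonadjacent. -/
def IsIndepFinset {V : Type*} (G : SimpleGraph V) (s : Finset V) : Prop :=
  ∀ u ∈ s, ∀ v ∈ s, ¬ G.Adj u v

open Classical in
/-- The independence polynomial of a finite graph, with real coefficients. -/
noncomputable def indepPoly {V : Type*} [Fintype V] (G : SimpleGraph V) : Polynomial ℝ :=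
  ∑ s : Finset V, if IsIndepFinset G s then (X : Polynomial ℝ) ^ s.card else 0

/-- `xi G` : the largest real root of the independence polynomial of `G`. -/
noncomputable def xi {V : Type*} [Fintype V] (G : SimpleGraph V) : ℝ :=
  sSup {x : ℝ | (indepPoly G).eval x = 0}

/-- `Pre H G` (`H ⪯ G`) : `I(H,x) ≥ I(G,x)` for all `x ∈ [ξ(G), 0]`. -/
def Pre {V W : Type*} [Fintype V] [Fintype W] (H : SimpleGraph W) (G : SimpleGraph V) : Prop :=
  ∀ x ∈ Set.Icc (xi G) 0, (indepPoly G).eval x ≤ (indepPoly H).eval x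

/-- `SPre H G` (`H ≺ G`). -/
def SPre {V W : Type*} [Fintype V] [Fintype W] (H : SimpleGraph W) (G : SimpleGraph V) : Prop :=
  Pre H G ∧ indepPoly H ≠ indepPoly G

open Classical in
/-- A graph is well-covered if all maximal independent sets have the same size. -/
def WellCovered {V : Type*} (G : SimpleGraph V) : Prop :=
  ∀ s t : Finset V,
    IsIndepFinset G s → (∀ v ∉ s, ¬ IsIndepFinset G (insert v s)) →
    IsIndepFinset G t → (∀ v ∉ t, ¬ IsIndepFinset G (insert v t)) →
    s.card = t.card

/-- A connected unicyclic graph: connected with as many edges as vertices. -/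
def Unicyclic {V : Type*} [Fintype V] (G : SimpleGraph V) : Prop :=
  G.Connected ∧ G.edgeSet.ncard = Fintype.card V

/-- The graph star (corona with `K₁`) of `G`: each vertex `inl v` gets a pendant
vertex `inr v`. -/
def corona {V : Type*} (G : SimpleGraph V) : SimpleGraph (V ⊕ V) :=
  SimpleGraph.fromRel (fun a b =>
    match a, b with
    | Sum.inl u, Sum.inl v => G.Adj u v
    | Sum.inl u, Sum.inr v => u = v
    | _, _ => False)

/-- `Ugraph n` (`U_n`, `n ≥ 3`): a triangle `0,1,2` with `n - 3` pendant vertices attached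
to vertex `0`. -/
def Ugraph (n : ℕ) : SimpleGraph (Fin n) :=
  SimpleGraph.fromRel (fun i j => i.val = 0 ∨ (i.val = 1 ∧ j.val = 2))

/-- `Dgraph n` (`D_n`, `n ≥ 4`): a path `0,1,...,n-1` plus the chord `{0,2}`, i.e. a
triangle with a path on `n - 3` vertices attached. -/
def Dgraph (n : ℕ) : SimpleGraph (Fin n) :=
  SimpleGraph.fromRel (fun i j => j.val = i.val + 1 ∨ (i.val = 0 ∧ j.val = 2))

/-- `starGraph n` (`S_n = K_{1,n-1}`): vertex `0` adjacent to all other vertices. -/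
def starGraph (n : ℕ) : SimpleGraph (Fin n) :=
  SimpleGraph.fromRel (fun i _ => i.val = 0)

/-- `Mgraph n` (`M_n`, odd `n ≥ 5`): a triangle `0,1,2` with `(n-3)/2` paths of length two
attached at vertex `0`; the middle vertices are the odd indices `3,5,...,n-2` and the leaf
attached to middle vertex `i` is `i + 1`. -/
def Mgraph (n : ℕ) : SimpleGraph (Fin n) :=
  SimpleGraph.fromRel (fun i j =>
    (i.val = 0 ∧ (j.val ≤ 2 ∨ j.val % 2 = 1)) ∨ (i.val = 1 ∧ j.val = 2) ∨
    (i.val % 2 = 1 ∧ 3 ≤ i.val ∧ j.val = i.val + 1))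

/-- `SPgraph g k ℓ` (`G(g,k,ℓ)`, for `g ∈ {3,5}` and `k + ℓ ≥ 1`): a cycle on the vertices
`0,...,g-1`, a copy of `P_k*` on the vertices `g,...,g+2k-1` (path vertices at even offsets,
each followed by its pendant vertex) joined to the cycle vertex `0` by an edge to the
path end `g`, and a copy of `P_ℓ*` on the vertices `g+2k,...,g+2k+2ℓ-1` joined to the cycle
vertex `2` by an edge to the path end `g+2k`. -/
def SPgraph (g k ℓ : ℕ) : SimpleGraph (Fin (g + 2*k + 2*ℓ)) :=
  SimpleGraph.fromRel (fun i j =>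
    (i.val < g ∧ j.val < g ∧ (j.val = i.val + 1 ∨ (i.val = 0 ∧ j.val = g - 1))) ∨
    (i.val = 0 ∧ 0 < k ∧ j.val = g) ∨
    (g ≤ i.val ∧ i.val < g + 2*k ∧ (i.val - g) % 2 = 0 ∧
      (j.val = i.val + 1 ∨ (j.val = i.val + 2 ∧ j.val < g + 2*k))) ∨
    (i.val = 2 ∧ 0 < ℓ ∧ j.val = g + 2*k) ∨
    (g + 2*k ≤ i.val ∧ (i.val - (g + 2*k)) % 2 = 0 ∧
      (j.val = i.val + 1 ∨ j.val = i.val + 2)))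

/-- `Gtree n` (`G_{2n}`, `n ≥ 5`): the tree on `2n` vertices with path `v_1 … v_n` at
indices `0,…,n-1`, `z_1` at index `n`, `y_1, y_2` at `n+1, n+2`, `x_1, x_2` at `n+3, n+4`
(with `v_3 z_1`, `v_3 y_1`, `y_1 y_2`, `v_5 x_1`, `x_1 x_2` edges), and pendant vertices
`w_j` at index `n + j - 1` attached to `v_j` for `6 ≤ j ≤ n`. -/
def Gtree (n : ℕ) : SimpleGraph (Fin (2*n)) :=
  SimpleGraph.fromRel (fun a b =>
    (a.val + 1 = b.val ∧ b.val < n) ∨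
    (a.val = 2 ∧ (b.val = n ∨ b.val = n + 1)) ∨
    (a.val = n + 1 ∧ b.val = n + 2) ∨
    (a.val = 4 ∧ b.val = n + 3) ∨
    (a.val = n + 3 ∧ b.val = n + 4) ∨
    (5 ≤ a.val ∧ a.val < n ∧ b.val = n + a.val))

/-!
To the right of the largest root of `I(G, ·)`, the independence polynomial of every induced subgraph
is positive and at least `I(G, ·)` (`Pos.subset`). Hence a comparison of largest roots follows from a
pointwise comparison of the polynomials on intervals `[z, 0]` where the smaller one is positive
(`xi_le_xi`).

*Reduction to coronas.* A well-covered unicyclic graph `G` of order `2n` has independence number `n`,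
and Hall's theorem provides a perfect matching such that any neighbour of a vertex is adjacent to any
neighbour of its partner (`exists_matching`). If every matched pair contains a leaf, `G` is a corona
`H*` with `H` unicyclic of order `n`. Otherwise exactly one pair contains no leaf, it lies on a 4-cycle,
and moving one edge of that cycle yields such a corona with the same polynomial (`exists_corona_IA`).
Since `I(H*, x) = (1 + x)^n I(H, x / (1 + x))` (`IA_corona`), it remains to compare `I(H, ·)`
with the polynomials of `C_n` and `U_n`.

*Cycles.* If `H` has a leaf `w`, the pendant path from `w` ends at a branch vertex `b`. Replacing an
edge `xb` outside the path with `xw` keeps the graph unicyclic, removes a leaf and does not decrease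
the polynomial (`Chain.IA_le_move`). Repeating this ends with the cycle (`IA_le_cycle`).

*The graphs `U_n`.* Their polynomial is `(1 + 2z)(1 + z)^(n-3) + z`, and induction on `n` by deleting
a leaf shows that it bounds `I(H, ·)` from below (`uPoly_le_IA`).
-/

namespace WellCoveredUnicyclic

open scoped Classical

variable {V W : Type*}

/-! ### Independence polynomials of vertex subsets and largest roots -/

/-- The independence polynomial of the subgraph of `G` induced on `A`, evaluated at `x`. Working
with finsets of vertices of a fixed graph avoids subtypes when vertices are deleted. -/
noncomputable def IA (G : SimpleGraph V) (A : Finset V) (x : ℝ) : ℝ :=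
  ∑ S ∈ A.powerset.filter (fun S => IsIndepFinset G S), x ^ S.card

lemma eval_indepPoly [Fintype V] (G : SimpleGraph V) (x : ℝ) :
    (indepPoly G).eval x = IA G Finset.univ x := by
  simp only [indepPoly, IA, Polynomial.eval_finsetSum, Finset.powerset_univ, Finset.sum_filter]
  refine Finset.sum_congr rfl fun S _ => ?_
  split_ifs <;> simp

lemma IA_empty (G : SimpleGraph V) (x : ℝ) : IA G ∅ x = 1 := by
  have : ({∅} : Finset (Finset V)).filter (fun S => IsIndepFinset G S) = {∅} := by
    ext S
    simp only [Finset.mem_filter, Finset.mem_singleton, and_iff_left_iff_imp]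
    rintro rfl
    simp [IsIndepFinset]
  simp [IA, this]

/-- The vertex recurrence `I(A + v) = I(A) + x I(A - N(v))`. -/
lemma IA_insert (G : SimpleGraph V) {A : Finset V} {v : V} (hv : v ∉ A) (x : ℝ) :
    IA G (insert v A) x = IA G A x + x * IA G (A.filter (fun u => ¬ G.Adj v u)) x := by
  unfold IA
  rw [Finset.sum_filter, Finset.sum_powerset_insert hv, ← Finset.sum_filter, ← Finset.sum_filter,
    Finset.mul_sum]
  congr 1
  refine Finset.sum_congr ?_ fun S hS => ?_
  · ext S
    simp only [Finset.mem_filter, Finset.mem_powerset]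
    simp only [IsIndepFinset, Finset.mem_insert, Finset.subset_iff, Finset.mem_filter]
    constructor
    · rintro ⟨h1, h2⟩
      exact ⟨fun u hu => ⟨h1 hu, h2 _ (Or.inl rfl) _ (Or.inr hu)⟩,
        fun u hu w hw => h2 _ (Or.inr hu) _ (Or.inr hw)⟩
    · rintro ⟨h1, h2⟩
      refine ⟨fun u hu => (h1 hu).1, ?_⟩
      rintro u (rfl | hu) w (rfl | hw)
      · exact G.loopless.irrefl _
      · exact (h1 hw).2
      · exact fun h => (h1 hu).2 h.symm
      · exact h2 u hu w hw
  · have hS' : S ⊆ A := by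
      intro u hu
      simp only [Finset.mem_filter, Finset.mem_powerset] at hS
      exact Finset.mem_of_mem_filter u (hS.1 hu)
    rw [Finset.card_insert_of_notMem (fun h => hv (hS' h)), pow_succ']

lemma IA_erase (G : SimpleGraph V) {A : Finset V} {v : V} (hv : v ∈ A) (x : ℝ) :
    IA G A x = IA G (A.erase v) x +
      x * IA G ((A.erase v).filter (fun u => ¬ G.Adj v u)) x := by
  conv_lhs => rw [← Finset.insert_erase hv]
  exact IA_insert G (Finset.notMem_erase v A) x

lemma IA_map (G : SimpleGraph V) (H : SimpleGraph W) (φ : V ↪ W) (A : Finset V)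
    (h : ∀ u ∈ A, ∀ v ∈ A, G.Adj u v ↔ H.Adj (φ u) (φ v)) (x : ℝ) :
    IA G A x = IA H (A.map φ) x := by
  unfold IA
  refine Finset.sum_bij (fun S _ => S.map φ) ?_ ?_ ?_ ?_
  · intro S hS
    simp only [Finset.mem_filter, Finset.mem_powerset] at hS ⊢
    refine ⟨Finset.map_subset_map.2 hS.1, ?_⟩
    intro u hu v hv
    obtain ⟨u', hu', rfl⟩ := Finset.mem_map.1 hu
    obtain ⟨v', hv', rfl⟩ := Finset.mem_map.1 hv
    rw [← h u' (hS.1 hu') v' (hS.1 hv')]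
    exact hS.2 u' hu' v' hv'
  · intro S _ T _ hST
    exact Finset.map_injective φ hST
  · intro T hT
    simp only [Finset.mem_filter, Finset.mem_powerset] at hT
    obtain ⟨S, hS, rfl⟩ := Finset.subset_map_iff.1 hT.1
    refine ⟨S, ?_, rfl⟩
    simp only [Finset.mem_filter, Finset.mem_powerset]
    refine ⟨hS, fun u hu v hv => ?_⟩
    rw [h u (hS hu) v (hS hv)]
    exact hT.2 _ (Finset.mem_map_of_mem φ hu) _ (Finset.mem_map_of_mem φ hv)
  · intro S _
    simp

lemma IA_congr {G H : SimpleGraph V} {A : Finset V}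
    (h : ∀ u ∈ A, ∀ v ∈ A, G.Adj u v ↔ H.Adj u v) (x : ℝ) : IA G A x = IA H A x := by
  have := IA_map G H (Function.Embedding.refl V) A h x
  simpa using this

lemma IA_univ_iso [Fintype V] [Fintype W] {G : SimpleGraph V} {H : SimpleGraph W} (φ : G ≃g H)
    (x : ℝ) : IA G Finset.univ x = IA H Finset.univ x := by
  rw [IA_map G H φ.toEquiv.toEmbedding Finset.univ (fun u _ v _ => (φ.map_adj_iff).symm) x]
  simp

lemma IA_insert_isolated (G : SimpleGraph V) {A : Finset V} {v : V} (hv : v ∉ A)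
    (h : ∀ u ∈ A, ¬ G.Adj v u) (x : ℝ) : IA G (insert v A) x = (1 + x) * IA G A x := by
  rw [IA_insert G hv, Finset.filter_true_of_mem h]; ring

lemma IA_continuous (G : SimpleGraph V) (A : Finset V) : Continuous (IA G A) := by
  unfold IA; fun_prop

lemma IA_zero (G : SimpleGraph V) (A : Finset V) : IA G A 0 = 1 := by
  induction A using Finset.induction_on with
  | empty => exact IA_empty G 0
  | insert a s ha ih => rw [IA_insert G ha, ih]; ring

lemma IA_pos_of_nonneg (G : SimpleGraph V) (A : Finset V) {x : ℝ} (hx : 0 ≤ x) :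
    0 < IA G A x := by
  refine Finset.sum_pos' (fun S _ => by positivity) ⟨∅, ?_, by simp⟩
  exact Finset.mem_filter.2 ⟨Finset.empty_mem_powerset _, by simp [IsIndepFinset]⟩

/-- `f` is positive on the whole interval `[z, 0]`. For an independence polynomial and `z ≤ 0`
this says that its largest real root is less than `z`. -/
def Pos (f : ℝ → ℝ) (z : ℝ) : Prop := ∀ t, z ≤ t → t ≤ 0 → 0 < f t

lemma Pos.mono {f : ℝ → ℝ} {z z' : ℝ} (h : Pos f z) (hz : z ≤ z') : Pos f z' :=
  fun t h1 h2 => h t (hz.trans h1) h2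

/-- To the right of its largest root, `I(B, ·)` is a lower bound for `I(A, ·)` for every `A ⊆ B`,
and in particular the latter is positive there. For a single deleted vertex `v`, at the largest
point where `I(B - v)` fails to be positive the recurrence would give `I(B) ≤ 0`. -/
theorem Pos.subset {G : SimpleGraph V} (B : Finset V) : ∀ {z : ℝ}, Pos (IA G B) z →
    ∀ A ⊆ B, Pos (IA G A) z ∧ ∀ t, z ≤ t → t ≤ 0 → IA G B t ≤ IA G A t := by
  induction B using Finset.strongInduction with
  | H B ih =>
  intro z hB A hAB
  by_cases hEq : A = B
  · subst hEq; exact ⟨hB, fun t _ _ => le_rfl⟩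
  obtain ⟨v, hvB, hvA⟩ := Finset.exists_of_ssubset (hAB.ssubset_of_ne hEq)
  have hss : B.erase v ⊂ B := Finset.erase_ssubset hvB
  have hAe : A ⊆ B.erase v := Finset.subset_erase.2 ⟨hAB, hvA⟩
  have hpos : Pos (IA G (B.erase v)) z := by
    by_contra hcon
    simp only [Pos, not_forall, not_lt] at hcon
    obtain ⟨s, hzs, hs0, hs⟩ := hcon
    have hcomp : IsCompact (Set.Icc z 0 ∩ {t | IA G (B.erase v) t ≤ 0}) :=
      isCompact_Icc.inter_right (isClosed_le (IA_continuous _ _) continuous_const)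
    -- the largest point of `[z, 0]` at which `I(B - v)` fails to be positive
    obtain ⟨m, hm⟩ := hcomp.exists_isGreatest ⟨s, ⟨hzs, hs0⟩, hs⟩
    obtain ⟨⟨⟨hzm, hm0⟩, hmle⟩, hmax⟩ := hm
    simp only [Set.mem_ofPred_eq] at hmle
    have hm0' : m < 0 := by
      rcases hm0.lt_or_eq with h | h
      · exact h
      · subst h; rw [IA_zero] at hmle; linarith
    have hright : ∀ t, m < t → t ≤ 0 → 0 < IA G (B.erase v) t := by
      intro t hmt ht0
      by_contra h
      exact absurd (hmax ⟨⟨hzm.trans hmt.le, ht0⟩, not_lt.1 h⟩) (not_le.2 hmt)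
    have hge : 0 ≤ IA G ((B.erase v).filter (fun u => ¬ G.Adj v u)) m := by
      refine ge_of_tendsto (x := nhdsWithin m (Set.Ioi m))
        ((IA_continuous G _).continuousAt.tendsto.mono_left nhdsWithin_le_nhds) ?_
      filter_upwards [Ioo_mem_nhdsGT hm0'] with t ht
      exact ((ih _ hss (z := t) (fun s hs hs0 => hright s (ht.1.trans_le hs) hs0) _
        (Finset.filter_subset _ _)).1 t le_rfl ht.2.le).le
    have := hB m hzm hm0
    rw [IA_erase G hvB] at this
    nlinarith
  have hle : ∀ t, z ≤ t → t ≤ 0 → IA G B t ≤ IA G (B.erase v) t := by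
    intro t h1 h2
    have := (ih _ hss hpos _ (Finset.filter_subset (fun u => ¬ G.Adj v u) _)).1 t h1 h2
    rw [IA_erase G hvB]
    nlinarith
  obtain ⟨h1, h2⟩ := ih _ hss hpos A hAe
  exact ⟨h1, fun t ht ht0 => (hle t ht ht0).trans (h2 t ht ht0)⟩

/-- Comparison of largest roots through positivity. The existence of a root of `I(A, ·)` matters:
the supremum of an empty set of reals is `0`. -/
lemma xi_le_xi {V W : Type*} [Fintype V] [Fintype W] {A : SimpleGraph V} {B : SimpleGraph W}
    (hA : ∃ x, IA A Finset.univ x = 0)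
    (h : ∀ x, x ≤ 0 → Pos (IA B Finset.univ) x → Pos (IA A Finset.univ) x) : xi A ≤ xi B := by
  unfold xi
  simp only [eval_indepPoly]
  refine csSup_le hA ?_
  intro a ha
  simp only [Set.mem_ofPred_eq] at ha
  have ha0 : a < 0 := by
    by_contra hcon
    exact absurd ha (IA_pos_of_nonneg A _ (not_lt.1 hcon)).ne'
  have hbdd : BddAbove {x : ℝ | IA B Finset.univ x = 0} := by
    refine ⟨0, fun x hx => ?_⟩
    by_contra hcon
    exact absurd hx (IA_pos_of_nonneg B _ (not_le.1 hcon).le).ne'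
  by_contra hcon
  push Not at hcon
  have hB : Pos (IA B Finset.univ) a := by
    intro t hat ht0
    by_contra hneg
    have hmem : (0 : ℝ) ∈ Set.Icc (IA B Finset.univ t) (IA B Finset.univ 0) :=
      ⟨not_lt.1 hneg, by rw [IA_zero]; norm_num⟩
    obtain ⟨s, hs, hs0⟩ := intermediate_value_Icc ht0 (IA_continuous B _).continuousOn hmem
    have := le_csSup hbdd (show s ∈ {x : ℝ | IA B Finset.univ x = 0} from hs0)
    linarith [hs.1]
  exact (h a ha0.le hB a le_rfl ha0.le).ne' ha

/-! ### Pendant paths and moving an edge -/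

/-- `Q (n + 1)` is the independence polynomial of the path on `n` vertices. The extra initial value
`Q 0 = 1` extends the recurrence one step to the left. -/
def Q : ℕ → ℝ → ℝ
  | 0, _ => 1
  | 1, _ => 1
  | n + 2, z => Q (n + 1) z + z * Q n z

/-- `Chain H U w W b`: outside the avoided set `U`, the vertices of `W` followed by `b` form a path
from `w` to `b`, and no vertex of `W` has a neighbour outside `U` other than its neighbours on
this path. The end `b` may have arbitrary further neighbours. -/
inductive Chain (H : SimpleGraph V) (U : Finset V) (w : V) : Finset V → V → Prop
  | base (b : V) : w ∉ U → b ∉ U → H.Adj w b → (∀ x, H.Adj w x → x = b ∨ x ∈ U) →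
      Chain H U w {w} b
  | step (W : Finset V) (b b' : V) : Chain H U w W b → b' ∉ insert b W → b' ∉ U → H.Adj b b' →
      (∀ x, H.Adj b x → x ∈ W ∨ x = b' ∨ x ∈ U) → Chain H U w (insert b W) b'

namespace Chain

variable {H : SimpleGraph V} {U : Finset V} {w b : V} {W : Finset V}

lemma start_mem (h : Chain H U w W b) : w ∈ W := by
  induction h with
  | base => simp
  | step W b b' _ _ _ _ _ ih => simp [ih]

lemma end_notMem (h : Chain H U w W b) : b ∉ W := by
  cases h with
  | base _ _ _ h => simpa using h.ne'
  | step _ _ _ _ h => exact h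

lemma end_notMem_avoid (h : Chain H U w W b) : b ∉ U := by
  cases h <;> assumption

lemma disjoint_avoid (h : Chain H U w W b) : Disjoint W U := by
  induction h with
  | base => simpa
  | step W b b' hc _ _ _ _ ih => simp [ih, hc.end_notMem_avoid]

lemma closed (h : Chain H U w W b) : ∀ v ∈ W, ∀ x, H.Adj v x → x ∈ W ∨ x = b ∨ x ∈ U := by
  induction h with
  | base b _ _ _ h => intro v hv x hx; rw [Finset.mem_singleton] at hv; subst hv; right; exact h x hx
  | step W b b' hc _ _ _ h ih =>
    intro v hv x hx
    rcases Finset.mem_insert.1 hv with rfl | hv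
    · rcases h x hx with h | h | h <;> simp [h]
    · rcases ih v hv x hx with h | h | h <;> simp [h]

lemma existsUnique_prev (h : Chain H U w W b) :
    ∃ p ∈ W, H.Adj b p ∧ ∀ q ∈ W, H.Adj b q → q = p := by
  cases h with
  | base _ _ _ h => exact ⟨w, by simp, h.symm, by simp⟩
  | step W b b' hc h1 h2 h3 h4 =>
    refine ⟨_, Finset.mem_insert_self _ _, h3.symm, fun q hq hbq => ?_⟩
    rcases Finset.mem_insert.1 hq with rfl | hq
    · rfl
    · rcases hc.closed q hq _ hbq.symm with h | h | h
      · exact absurd (Finset.mem_insert_of_mem h) h1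
      · exact absurd (h ▸ Finset.mem_insert_self _ _) h1
      · exact absurd h h2

lemma reachable (h : Chain H U w W b) : ∀ H' : SimpleGraph V,
    (∀ x ∈ insert b W, ∀ y ∈ insert b W, H.Adj x y → H'.Adj x y) → H'.Reachable w b := by
  induction h with
  | base b _ _ h _ => intro H' hH; exact (hH _ (by simp) _ (by simp) h).reachable
  | step W b b' hc h1 h2 h3 h4 ih =>
    intro H' hH
    refine (ih H' fun x hx y hy => hH x (Finset.mem_insert_of_mem hx) y
      (Finset.mem_insert_of_mem hy)).trans ?_
    exact (hH _ (by simp) _ (by simp) h3).reachable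

/-- If nothing is avoided, the vertices of `W` have degree two, except that `w` has degree one. -/
lemma sum_degree [Fintype V] (h : Chain H ∅ w W b) : ∑ v ∈ W, H.degree v + 1 = 2 * W.card := by
  induction h with
  | base b _ _ h1 h2 =>
    have : H.neighborFinset w = {b} := by
      ext x
      simp only [mem_neighborFinset, Finset.mem_singleton]
      exact ⟨fun h => (h2 x h).resolve_right (by simp), fun h => h ▸ h1⟩
    simp [← card_neighborFinset_eq_degree, this]
  | step W b b' hc h1 h2 h3 h4 ih =>
    obtain ⟨p, hp, hbp, hp'⟩ := hc.existsUnique_prev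
    have hpb' : p ≠ b' := fun h => h1 (Finset.mem_insert_of_mem (h ▸ hp))
    have : H.neighborFinset b = {p, b'} := by
      ext x
      simp only [mem_neighborFinset, Finset.mem_insert, Finset.mem_singleton]
      constructor
      · intro h
        rcases h4 x h with h' | h' | h'
        · exact Or.inl (hp' x h' h)
        · exact Or.inr h'
        · simp at h'
      · rintro (rfl | rfl)
        · exact hbp
        · exact h3
    rw [Finset.sum_insert hc.end_notMem, Finset.card_insert_of_notMem hc.end_notMem,
      ← card_neighborFinset_eq_degree, this, Finset.card_pair hpb']
    omega

/-- Independence polynomials of a chain, with and without its first vertex `w`, and with and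
without its end `b`, attached to a set `A` that meets the chain only through edges at `b`. -/
lemma formulas (h : Chain H U w W b) (z : ℝ) : ∃ m, W.card = m + 1 ∧
    ∀ A : Finset V, Disjoint A W → Disjoint A U → b ∉ A →
      IA H (A ∪ W) z = Q (m + 2) z * IA H A z ∧
      IA H (A ∪ W.erase w) z = Q (m + 1) z * IA H A z ∧
      IA H (insert b A ∪ W) z = Q (m + 2) z * IA H A z +
        z * (Q (m + 1) z * IA H (A.filter (fun x => ¬ H.Adj b x)) z) ∧
      IA H (insert b A ∪ W.erase w) z = Q (m + 1) z * IA H A z +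
        z * (Q m z * IA H (A.filter (fun x => ¬ H.Adj b x)) z) := by
  induction h with
  | base b hw hb h1 h2 =>
    refine ⟨0, by simp, fun A hAW hAU hbA => ?_⟩
    have hwA : w ∉ A := by simpa using hAW
    have hnot : ∀ x ∈ A, ¬ H.Adj w x := by
      intro x hx h
      rcases h2 x h with rfl | h
      · exact hbA hx
      · exact Finset.disjoint_left.1 hAU hx h
    have e1 : A ∪ {w} = insert w A := by ext; simp
    have e2 : insert b A ∪ {w} = insert w (insert b A) := by ext; simp; tauto
    have e3 : (insert b A).filter (fun x => ¬ H.Adj w x) = A := by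
      rw [Finset.filter_insert, if_neg (not_not.2 h1), Finset.filter_true_of_mem hnot]
    refine ⟨?_, ?_, ?_, ?_⟩
    · rw [e1, IA_insert_isolated H hwA hnot]; simp [Q]
    · simp [Q]
    · rw [e2, IA_insert H (by simp [hwA, h1.ne]), e3, IA_insert H hbA]; simp [Q]; ring
    · simp only [Finset.erase_singleton, Finset.union_empty]
      rw [IA_insert H hbA]; simp [Q]
  | step W b b' hc h1 h2 h3 h4 ih =>
    obtain ⟨m, hm, ih⟩ := ih
    refine ⟨m + 1, by rw [Finset.card_insert_of_notMem hc.end_notMem, hm], fun A hAW hAU hbA => ?_⟩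
    have hbA' : b ∉ A := fun h => Finset.disjoint_left.1 hAW h (Finset.mem_insert_self _ _)
    have hAW' : Disjoint A W := hAW.mono_right (Finset.subset_insert _ _)
    have hb'W : b' ∉ W := fun h => h1 (Finset.mem_insert_of_mem h)
    have hbb' : b ≠ b' := h3.ne
    have hnot : ∀ x ∈ A, ¬ H.Adj b x := by
      intro x hx h
      rcases h4 x h with h | rfl | h
      · exact Finset.disjoint_left.1 hAW' hx h
      · exact hbA hx
      · exact Finset.disjoint_left.1 hAU hx h
    have hwb : b ≠ w := fun h => hc.end_notMem (h ▸ hc.start_mem)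
    have e1 : A ∪ insert b W = insert b A ∪ W := by ext; simp
    have e2 : insert b' A ∪ insert b W = insert b (insert b' A) ∪ W := by ext; simp
    have e3 : A ∪ (insert b W).erase w = insert b A ∪ W.erase w := by
      rw [Finset.erase_insert_of_ne hwb]; ext; simp
    have e4 : insert b' A ∪ (insert b W).erase w = insert b (insert b' A) ∪ W.erase w := by
      rw [Finset.erase_insert_of_ne hwb]; ext; simp
    have e5 : A.filter (fun x => ¬ H.Adj b x) = A := Finset.filter_true_of_mem hnot
    have e6 : (insert b' A).filter (fun x => ¬ H.Adj b x) = A := by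
      rw [Finset.filter_insert, if_neg (not_not.2 h3), e5]
    obtain ⟨_, _, i3, i4⟩ := ih A hAW' hAU hbA'
    obtain ⟨_, _, j3, j4⟩ := ih (insert b' A) (by simp [hAW', hb'W]) (by simp [hAU, h2])
      (by simp [hbA', hbb'])
    rw [e5] at i3 i4
    rw [e6, IA_insert H hbA] at j3 j4
    rw [e1, e2, e3, e4, i3, i4, j3, j4]
    simp only [Q]
    refine ⟨by ring, by ring, by ring, by ring⟩

/-- The polynomial `Q m` occurring in the chain formulas is that of an induced subgraph, so that
`Pos.subset` applies to it. -/
lemma exists_eq_Q (h : Chain H U w W b) {m : ℕ} (hm : W.card = m + 1) :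
    ∃ B : Finset V, ∀ z, IA H B z = Q m z := by
  cases h with
  | base =>
    have : m = 0 := by simpa using hm.symm
    subst this
    exact ⟨∅, fun z => by rw [IA_empty]; rfl⟩
  | step W b b' hc h1 h2 h3 h4 =>
    refine ⟨W.erase w, fun z => ?_⟩
    obtain ⟨k, hk, hf⟩ := hc.formulas z
    rw [Finset.card_insert_of_notMem hc.end_notMem] at hm
    obtain rfl : m = k + 1 := by omega
    have := (hf ∅ (by simp) (by simp) (by simp)).2.1
    simpa [IA_empty] using this

end Chain

/-- The graph obtained from `H` by replacing the edge `ub` with `uw`. -/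
def move (H : SimpleGraph V) (u b w : V) : SimpleGraph V :=
  H.deleteEdges {s(u, b)} ⊔ SimpleGraph.edge u w

lemma move_adj {H : SimpleGraph V} {u b w x y : V} : (move H u b w).Adj x y ↔
    (H.Adj x y ∧ s(x, y) ≠ s(u, b)) ∨ (s(x, y) = s(u, w) ∧ x ≠ y) := by
  simp [move, edge_adj, deleteEdges_adj]

lemma move_adj_of_ne {H : SimpleGraph V} {u b w x y : V} (hx : x ≠ u) (hy : y ≠ u) :
    (move H u b w).Adj x y ↔ H.Adj x y := by
  rw [move_adj]; simp [hx, hy]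

lemma move_adj_left {H : SimpleGraph V} {u b w y : V} (huw : u ≠ w) :
    (move H u b w).Adj u y ↔ (H.Adj u y ∧ y ≠ b) ∨ y = w := by
  rw [move_adj]
  simp only [Sym2.eq_iff]
  constructor
  · rintro (h | h)
    · left; refine ⟨h.1, ?_⟩; rintro rfl; simp at h
    · right; simp at h; tauto
  · rintro (h | rfl)
    · left; refine ⟨h.1, ?_⟩; have := h.1.ne; simp [h.2]; intro h1 h2; exact this h2.symm
    · right; simp [huw]

lemma move_connected {H : SimpleGraph V} {u b w : V} (hH : H.Connected) (huw : u ≠ w)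
    (hr : (H.deleteEdges {s(u, b)}).Reachable w b) : (move H u b w).Connected := by
  have hle : H.deleteEdges {s(u, b)} ≤ move H u b w := le_sup_left
  have hub : (move H u b w).Reachable u b :=
    ((move_adj_left huw).2 (Or.inr rfl)).reachable.trans (hr.mono hle)
  have := hH.nonempty
  refine ⟨fun x y => ?_⟩
  obtain ⟨p⟩ := hH.preconnected x y
  induction p with
  | nil => exact Reachable.refl _
  | cons hadj p ih =>
    rename_i y z _
    refine Reachable.trans ?_ ih
    by_cases he : s(y, z) = s(u, b)
    · rcases Sym2.eq_iff.1 he with ⟨rfl, rfl⟩ | ⟨rfl, rfl⟩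
      · exact hub
      · exact hub.symm
    · exact (move_adj.2 (Or.inl ⟨hadj, he⟩)).reachable

lemma move_ncard [Finite V] {H : SimpleGraph V} {u b w : V} (huw : u ≠ w) (hub : H.Adj u b)
    (hnw : ¬ H.Adj u w) : (move H u b w).edgeSet.ncard = H.edgeSet.ncard := by
  have : (move H u b w).edgeSet = insert s(u, w) (H.edgeSet \ {s(u, b)}) := by
    ext e
    induction e with
    | _ x y =>
    rw [mem_edgeSet, move_adj]
    simp only [Set.mem_insert_iff, Set.mem_sdiff, mem_edgeSet, Set.mem_singleton_iff]
    constructor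
    · tauto
    · rintro (h | h)
      · right
        refine ⟨h, ?_⟩
        rintro rfl
        rcases Sym2.eq_iff.1 h with ⟨h1, h2⟩ | ⟨h1, h2⟩
        · exact huw (h1.symm.trans h2)
        · exact huw (h2.symm.trans h1)
      · exact Or.inl h
  rw [this, Set.ncard_insert_of_notMem (by simp [hnw]) (Set.toFinite _),
    Set.ncard_sdiff_singleton_add_one (by simpa using hub) (Set.toFinite _)]

/-- Both polynomials expanded at the common end `u` of the removed and the added edge. -/
lemma IA_move [Fintype V] {H : SimpleGraph V} {u b w : V} (huw : u ≠ w) (hub : H.Adj u b)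
    (hnw : ¬ H.Adj u w) (z : ℝ) :
    let B := Finset.univ.filter (fun x => x ≠ u ∧ ¬ H.Adj u x ∧ x ≠ w)
    IA H Finset.univ z = IA H (Finset.univ.erase u) z + z * IA H (insert w B) z ∧
    IA (move H u b w) Finset.univ z = IA H (Finset.univ.erase u) z + z * IA H (insert b B) z := by
  intro B
  have hwb : b ≠ w := fun h => hnw (h ▸ hub)
  constructor
  · rw [IA_erase H (Finset.mem_univ u)]
    congr 3
    ext x
    simp only [B, Finset.mem_filter, Finset.mem_erase, Finset.mem_insert, Finset.mem_univ]
    by_cases hxw : x = w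
    · subst hxw; simp [huw.symm, hnw]
    · simp [hxw]
  · rw [IA_erase _ (Finset.mem_univ u)]
    congr 1
    · exact IA_congr (fun x hx y hy => move_adj_of_ne (by simpa using hx) (by simpa using hy)) z
    · congr 1
      have : (Finset.univ.erase u).filter (fun x => ¬ (move H u b w).Adj u x) = insert b B := by
        ext x
        simp only [B, Finset.mem_filter, Finset.mem_erase, Finset.mem_insert, Finset.mem_univ,
          move_adj_left huw]
        by_cases hxb : x = b
        · subst hxb; simp [hub.ne', hwb]
        · simp [hxb]
      rw [this]
      refine IA_congr (fun x hx y hy => move_adj_of_ne ?_ ?_) z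
      · rintro rfl; simp [B, hub.ne] at hx
      · rintro rfl; simp [B, hub.ne] at hy

/-- Moving an edge `ub` at the end `b` of a pendant path to its leaf `w` does not decrease the
independence polynomial to the right of its largest root: the difference of the two sides is
`t² Q(m) (I(A - N(b)) - I(A))`. -/
lemma Chain.IA_le_move [Fintype V] {H : SimpleGraph V} {u b w : V} {W : Finset V}
    (h : Chain H ∅ w W b) (huW : u ∉ W) (hub : H.Adj u b) {t : ℝ} (ht : t ≤ 0)
    (hp : Pos (IA H Finset.univ) t) :
    IA H Finset.univ t ≤ IA (move H u b w) Finset.univ t := by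
  have huw : u ≠ w := fun e => huW (e ▸ h.start_mem)
  have hnW : ∀ v ∈ W, ¬ H.Adj u v := by
    intro v hv ha
    rcases h.closed v hv u ha.symm with h' | h' | h'
    · exact huW h'
    · exact hub.ne h'
    · simp at h'
  obtain ⟨e1, e2⟩ := IA_move huw hub (hnW w h.start_mem) t
  set B := Finset.univ.filter (fun x => x ≠ u ∧ ¬ H.Adj u x ∧ x ≠ w) with hB
  rw [e1, e2]
  set A := B \ W with hA
  have hWB : W.erase w ⊆ B := by
    intro x hx
    obtain ⟨hxw, hx⟩ := Finset.mem_erase.1 hx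
    simp only [hB, Finset.mem_filter, Finset.mem_univ, true_and]
    exact ⟨fun e => huW (e ▸ hx), hnW x hx, hxw⟩
  have hwB : w ∉ B := by simp [hB]
  have s1 : insert w B = A ∪ W := by
    ext x
    simp only [hA, Finset.mem_insert, Finset.mem_union, Finset.mem_sdiff]
    constructor
    · rintro (rfl | hx)
      · exact Or.inr h.start_mem
      · tauto
    · rintro (hx | hx)
      · exact Or.inr hx.1
      · by_cases hxw : x = w
        · exact Or.inl hxw
        · exact Or.inr (hWB (Finset.mem_erase.2 ⟨hxw, hx⟩))
  have s2 : insert b B = insert b A ∪ W.erase w := by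
    ext x
    simp only [hA, Finset.mem_insert, Finset.mem_union, Finset.mem_sdiff, Finset.mem_erase]
    constructor
    · rintro (rfl | hx)
      · exact Or.inl (Or.inl rfl)
      · by_cases hxW : x ∈ W
        · exact Or.inr ⟨fun e => hwB (e ▸ hx), hxW⟩
        · exact Or.inl (Or.inr ⟨hx, hxW⟩)
    · rintro ((rfl | hx) | hx)
      · exact Or.inl rfl
      · exact Or.inr hx.1
      · exact Or.inr (hWB (Finset.mem_erase.2 hx))
  have hbA : b ∉ A := by simp [hA, hB, hub]
  obtain ⟨m, hm, hf⟩ := h.formulas t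
  obtain ⟨f1, -, -, f4⟩ := hf A (Finset.sdiff_disjoint) (by simp) hbA
  obtain ⟨B', hB'⟩ := h.exists_eq_Q hm
  have hQ : 0 < Q m t := by
    rw [← hB']
    exact (hp.subset _ _ (Finset.subset_univ B')).1 t le_rfl ht
  have hmono : IA H A t ≤ IA H (A.filter (fun x => ¬ H.Adj b x)) t :=
    (((hp.subset _ _ (Finset.subset_univ A)).1).subset _ _ (Finset.filter_subset _ _)).2 t le_rfl ht
  rw [s1, s2, f1, f4]
  simp only [Q]
  have : 0 ≤ (t * t) * (Q m t * (IA H (A.filter (fun x => ¬ H.Adj b x)) t - IA H A t)) := by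
    exact mul_nonneg (mul_self_nonneg t) (mul_nonneg hQ.le (sub_nonneg.2 hmono))
  nlinarith

/-! ### Comparison with the cycle -/

lemma eq_univ_of_closed [Fintype V] {H : SimpleGraph V} (hH : H.Connected) {S : Finset V} {a : V}
    (ha : a ∈ S) (h : ∀ v ∈ S, ∀ x, H.Adj v x → x ∈ S) : S = Finset.univ := by
  refine Finset.eq_univ_iff_forall.2 fun y => ?_
  obtain ⟨p⟩ := hH.preconnected a y
  induction p with
  | nil => exact ha
  | cons hadj p ih => exact ih (h _ ha _ hadj)

lemma sum_degree_eq [Fintype V] (H : SimpleGraph V) :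
    ∑ v, H.degree v = 2 * H.edgeSet.ncard := by
  rw [sum_degrees_eq_twice_card_edges, ← coe_edgeFinset, Set.ncard_coe_finset]

lemma exists_two_of_degree [Fintype V] {H : SimpleGraph V} {v : V} (h : H.degree v = 2) :
    ∃ a b, a ≠ b ∧ ∀ x, H.Adj v x ↔ x = a ∨ x = b := by
  rw [← card_neighborFinset_eq_degree, Finset.card_eq_two] at h
  obtain ⟨a, b, hab, he⟩ := h
  refine ⟨a, b, hab, fun x => ?_⟩
  rw [← mem_neighborFinset, he]; simp

/-- A connected 2-regular graph has the independence polynomial of a cycle: starting from a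
neighbour `w` of a vertex `u`, a chain avoiding `u` is extended until it returns to `u`. -/
theorem IA_of_two_regular [Fintype V] {H : SimpleGraph V} (hH : H.Connected)
    (hd : ∀ v, H.degree v = 2) (z : ℝ) {m : ℕ} (hm : Fintype.card V = m + 3) :
    IA H Finset.univ z = Q (m + 2) z + 2 * z * Q (m + 1) z := by
  obtain ⟨u⟩ := hH.nonempty
  obtain ⟨w, w2, hww, hu⟩ := exists_two_of_degree (hd u)
  have huw : H.Adj u w := (hu w).2 (Or.inl rfl)
  have other : ∀ v p, H.Adj v p → ∃ q, q ≠ p ∧ ∀ x, H.Adj v x ↔ x = p ∨ x = q := by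
    intro v p hp
    obtain ⟨a, b, hab, h⟩ := exists_two_of_degree (hd v)
    rcases (h p).1 hp with rfl | rfl
    · exact ⟨b, hab.symm, h⟩
    · exact ⟨a, hab, fun x => (h x).trans or_comm⟩
  have ext : ∀ k W b, Chain H {u} w W b → Fintype.card V - W.card = k →
      ∃ W b, Chain H {u} w W b ∧ H.Adj b u := by
    intro k
    induction k using Nat.strong_induction_on with
    | _ k ih =>
    intro W b hc hk
    by_cases hbu : H.Adj b u
    · exact ⟨W, b, hc, hbu⟩
    obtain ⟨p, hpW, hbp, hp⟩ := hc.existsUnique_prev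
    obtain ⟨q, hqp, hq⟩ := other b p hbp
    have hbq : H.Adj b q := (hq q).2 (Or.inr rfl)
    have hqW : q ∉ W := fun h => hqp (hp q h hbq)
    have hlt := Finset.card_lt_univ_of_notMem hc.end_notMem
    refine ih (Fintype.card V - (insert b W).card) ?_ _ _
      (Chain.step W b q hc ?_ ?_ hbq ?_) rfl
    · rw [Finset.card_insert_of_notMem hc.end_notMem]; omega
    · simp [hqW, hbq.ne']
    · rintro h; exact hbu (Finset.mem_singleton.1 h ▸ hbq)
    · intro x hx
      rcases (hq x).1 hx with rfl | rfl
      · exact Or.inl hpW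
      · exact Or.inr (Or.inl rfl)
  obtain ⟨b0, hb0, hw⟩ := other w u huw.symm
  obtain ⟨W, b, hc, hbu⟩ := ext _ _ _ (Chain.base (H := H) (U := {u}) (w := w) b0
    (by simpa using huw.ne') (by simpa using hb0) ((hw b0).2 (Or.inr rfl))
    (fun x hx => by simpa [or_comm] using (hw x).1 hx)) rfl
  have huW : u ∉ W := by simpa using hc.disjoint_avoid
  have hbW := hc.end_notMem
  have hwb : w ≠ b := fun h => hbW (h ▸ hc.start_mem)
  have hu' : ∀ x, H.Adj u x ↔ x = w ∨ x = b := by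
    intro x
    rcases (hu b).1 hbu.symm with h | h
    · exact absurd h.symm hwb
    · rw [h]; exact hu x
  obtain ⟨p, hpW, hbp, hp⟩ := hc.existsUnique_prev
  have huniv : insert u (insert b W) = Finset.univ := by
    refine eq_univ_of_closed hH (Finset.mem_insert_self _ _) ?_
    intro v hv x hx
    rcases Finset.mem_insert.1 hv with rfl | hv
    · rcases (hu' x).1 hx with rfl | rfl
      · simp [hc.start_mem]
      · simp
    · rcases Finset.mem_insert.1 hv with rfl | hv
      · obtain ⟨q, hqp, hq⟩ := other v p hbp
        rcases (hq u).1 hbu with h | h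
        · exact absurd (h ▸ hpW) huW
        · rcases (hq x).1 hx with rfl | rfl
          · simp [hpW]
          · simp [h]
      · rcases hc.closed v hv x hx with h | h | h
        · simp [h]
        · simp [h]
        · simp at h; simp [h]
  obtain ⟨k, hk, hf⟩ := hc.formulas z
  obtain ⟨-, f2, f3, -⟩ := hf ∅ (by simp) (by simp) (by simp)
  have hubW : u ∉ insert b W := by simp [huW, hbu.ne']
  have hcard : Fintype.card V = k + 3 := by
    rw [← Finset.card_univ, ← huniv, Finset.card_insert_of_notMem hubW,
      Finset.card_insert_of_notMem hbW, hk]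
  obtain rfl : m = k := by omega
  have hfil : (insert b W).filter (fun x => ¬ H.Adj u x) = W.erase w := by
    ext x
    simp only [Finset.mem_filter, Finset.mem_insert, Finset.mem_erase, hu']
    constructor
    · rintro ⟨h1, h2⟩; tauto
    · rintro ⟨h1, h2⟩
      refine ⟨Or.inr h2, ?_⟩
      rintro (h | rfl)
      · exact h1 h
      · exact hbW h2
  rw [← huniv, IA_insert H hubW, hfil]
  have g3 : IA H (insert b W) z = Q (m + 2) z + z * Q (m + 1) z := by
    simpa [IA_empty, Finset.insert_union] using f3
  have g2 : IA H (W.erase w) z = Q (m + 1) z := by simpa [IA_empty] using f2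
  rw [g2, g3]; ring

lemma two_regular_of_no_leaf [Fintype V] {H : SimpleGraph V} (hH : H.Connected)
    (hV : 3 ≤ Fintype.card V) (he : H.edgeSet.ncard = Fintype.card V)
    (hl : ∀ v, H.degree v ≠ 1) : ∀ v, H.degree v = 2 := by
  have hpos : ∀ v, 2 ≤ H.degree v := by
    intro v
    have : Nontrivial V := Fintype.one_lt_card_iff_nontrivial.1 (by omega)
    have := hH.preconnected.degree_pos_of_nontrivial v
    have := hl v
    omega
  have hsum := sum_degree_eq H
  rw [he] at hsum
  have : ∑ v : V, 2 = ∑ v, H.degree v := by rw [hsum]; simp [mul_comm]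
  intro v
  exact ((Finset.sum_eq_sum_iff_of_le fun v _ => hpos v).1 this v (Finset.mem_univ v)).symm

/-- A leaf of a unicyclic graph starts a pendant path that ends at a vertex `b` with at least two
further neighbours; otherwise the whole graph would be a path, which has too few edges. -/
lemma exists_chain_branch [Fintype V] {H : SimpleGraph V} (hH : H.Connected)
    (he : H.edgeSet.ncard = Fintype.card V) {w : V} (hw : H.degree w = 1) :
    ∃ W b x y, Chain H ∅ w W b ∧ x ≠ y ∧ x ∉ W ∧ y ∉ W ∧ H.Adj b x ∧ H.Adj b y := by
  have ext : ∀ k W b, Chain H ∅ w W b → Fintype.card V - W.card = k →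
      ∃ W b x y, Chain H ∅ w W b ∧ x ≠ y ∧ x ∉ W ∧ y ∉ W ∧ H.Adj b x ∧ H.Adj b y := by
    intro k
    induction k using Nat.strong_induction_on with
    | _ k ih =>
    intro W b hc hk
    obtain ⟨p, hpW, hbp, hp⟩ := hc.existsUnique_prev
    have hlt := Finset.card_lt_univ_of_notMem hc.end_notMem
    by_cases h1 : ∃ x, x ∉ W ∧ H.Adj b x
    · obtain ⟨x, hxW, hbx⟩ := h1
      by_cases h2 : ∃ y, y ∉ W ∧ H.Adj b y ∧ x ≠ y
      · obtain ⟨y, hyW, hby, hxy⟩ := h2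
        exact ⟨W, b, x, y, hc, hxy, hxW, hyW, hbx, hby⟩
      · push Not at h2
        refine ih (Fintype.card V - (insert b W).card) ?_ _ _
          (Chain.step W b x hc (by simp [hxW, hbx.ne']) (by simp) hbx ?_) rfl
        · rw [Finset.card_insert_of_notMem hc.end_notMem]; omega
        · intro y hy
          by_cases hyW : y ∈ W
          · exact Or.inl hyW
          · exact Or.inr (Or.inl (h2 y hyW hy).symm)
    · push Not at h1
      have huniv : insert b W = Finset.univ := by
        refine eq_univ_of_closed hH (Finset.mem_insert_self _ _) ?_
        intro v hv x hx
        rcases Finset.mem_insert.1 hv with rfl | hv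
        · by_contra hcon
          exact h1 x (fun h => hcon (Finset.mem_insert_of_mem h)) hx
        · rcases hc.closed v hv x hx with h | h | h
          · simp [h]
          · simp [h]
          · simp at h
      have hdb : H.degree b = 1 := by
        rw [← card_neighborFinset_eq_degree, Finset.card_eq_one]
        refine ⟨p, ?_⟩
        ext x
        simp only [mem_neighborFinset, Finset.mem_singleton]
        refine ⟨fun h => ?_, fun h => h ▸ hbp⟩
        by_contra hne
        exact h1 x (fun hxW => hne (hp x hxW h)) h
      have hs := sum_degree_eq H
      have hs' := hc.sum_degree
      rw [he, ← Finset.card_univ, ← huniv, Finset.sum_insert hc.end_notMem,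
        Finset.card_insert_of_notMem hc.end_notMem, hdb] at hs
      omega
  obtain ⟨b, hb⟩ := degree_eq_one_iff_existsUnique_adj.1 hw
  exact ext _ _ _ (Chain.base b (by simp) (by simp) hb.1 fun x hx => Or.inl (hb.2 x hx)) rfl

/-- Among connected unicyclic graphs of given order the cycle has the largest independence
polynomial, by induction on the number of leaves: moving an edge at the branch vertex of a pendant
path to its leaf removes that leaf and creates no new one. -/
theorem IA_le_cycle [Fintype V] {m : ℕ} (hm : Fintype.card V = m + 3) : ∀ (k : ℕ)
    (H : SimpleGraph V), H.Connected → H.edgeSet.ncard = Fintype.card V →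
    (Finset.univ.filter (fun v => H.degree v = 1)).card = k → ∀ z, z ≤ 0 →
    Pos (IA H Finset.univ) z → IA H Finset.univ z ≤ Q (m + 2) z + 2 * z * Q (m + 1) z := by
  intro k
  induction k using Nat.strong_induction_on with
  | _ k ih =>
  intro H hH he hk z hz hp
  by_cases hl : ∀ v, H.degree v ≠ 1
  · exact (IA_of_two_regular hH (two_regular_of_no_leaf hH (by omega) he hl) z hm).le
  push Not at hl
  obtain ⟨w, hw⟩ := hl
  obtain ⟨W, b, x, y, hc, hxy, hxW, hyW, hbx, hby⟩ := exists_chain_branch hH he hw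
  have hwb : w ≠ b := fun h => hc.end_notMem (h ▸ hc.start_mem)
  have hxw : x ≠ w := fun h => hxW (h ▸ hc.start_mem)
  have hnxw : ¬ H.Adj x w := by
    intro h
    rcases hc.closed w hc.start_mem x h.symm with h | h | h
    · exact hxW h
    · exact hbx.ne' h
    · simp at h
  have hle : ∀ t, z ≤ t → t ≤ 0 →
      IA H Finset.univ t ≤ IA (move H x b w) Finset.univ t := fun t h1 h2 =>
    hc.IA_le_move hxW hbx.symm h2 (hp.mono h1)
  have hconn : (move H x b w).Connected := by
    refine move_connected hH hxw (hc.reachable _ ?_)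
    intro p hp q hq hpq
    have hx' : x ∉ insert b W := by simp [hxW, hbx.ne']
    rw [deleteEdges_adj]
    refine ⟨hpq, ?_⟩
    rintro h
    rcases Sym2.eq_iff.1 h with ⟨rfl, rfl⟩ | ⟨rfl, rfl⟩
    · exact hx' hp
    · exact hx' hq
  refine (hle z le_rfl hz).trans (ih _ ?_ (move H x b w) hconn ?_ rfl z hz
    fun t h1 h2 => (hp t h1 h2).trans_le (hle t h1 h2))
  · rw [← hk]
    refine Finset.card_lt_card (Finset.ssubset_iff_of_subset ?_ |>.2 ⟨w, by simp [hw], ?_⟩)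
    · intro v hv
      simp only [Finset.mem_filter, Finset.mem_univ, true_and] at hv ⊢
      obtain ⟨a, ha, hau⟩ := degree_eq_one_iff_existsUnique_adj.1 hv
      obtain ⟨p, hpW, hbp, -⟩ := hc.existsUnique_prev
      have hpx : p ≠ x := fun h => hxW (h ▸ hpW)
      have hpy : p ≠ y := fun h => hyW (h ▸ hpW)
      have hvb : v ≠ b := by
        rintro rfl
        have h1 := hau p ((move_adj_of_ne hbx.ne hpx).2 hbp)
        have h2 := hau y ((move_adj_of_ne hbx.ne hxy.symm).2 hby)
        exact hpy (h1.trans h2.symm)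
      by_cases hvw : v = w
      · rw [hvw]; exact hw
      by_cases hvx : v = x
      · subst hvx
        have h1 : ∀ q, H.Adj v q → q = b := by
          intro q hq
          by_contra hqb
          have h1 := hau w ((move_adj_left hxw).2 (Or.inr rfl))
          have h2 := hau q ((move_adj_left hxw).2 (Or.inl ⟨hq, hqb⟩))
          exact hnxw (h1.trans h2.symm ▸ hq)
        exact degree_eq_one_iff_existsUnique_adj.2 ⟨b, hbx.symm, h1⟩
      · have hiff : ∀ q, (move H x b w).Adj v q ↔ H.Adj v q := by
          intro q
          by_cases hq : q = x
          · subst hq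
            rw [adj_comm, move_adj_left hxw, adj_comm]
            simp [hvb, hvw]
          · exact move_adj_of_ne hvx hq
        exact degree_eq_one_iff_existsUnique_adj.2 ⟨a, (hiff a).1 ha, fun q hq => hau q ((hiff q).2 hq)⟩
    · simp only [Finset.mem_filter, Finset.mem_univ, true_and]
      intro hd
      obtain ⟨a, ha, hau⟩ := degree_eq_one_iff_existsUnique_adj.1 hd
      obtain ⟨q, hq, -⟩ := degree_eq_one_iff_existsUnique_adj.1 hw
      have hqx : q ≠ x := fun h => hnxw (h ▸ hq.symm)
      have h1 := hau q ((move_adj_of_ne hxw.symm hqx).2 hq)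
      have h2 := hau x (((move_adj_left hxw).2 (Or.inr rfl)).symm)
      exact hqx (h1.trans h2.symm)
  · rw [move_ncard hxw hbx.symm hnxw, he]

lemma IA_cycleGraph (m : ℕ) (z : ℝ) :
    IA (cycleGraph (m + 3)) Finset.univ z = Q (m + 2) z + 2 * z * Q (m + 1) z := by
  refine IA_of_two_regular (cycleGraph_connected (n := m + 2)) (fun v => ?_) z (by simp)
  convert cycleGraph_degree_three_le (n := m) (v := v)

/-! ### Comparison with the graphs `U_n` -/

/-- The independence polynomial of `U_(m+3)`. -/
def uPoly (m : ℕ) (z : ℝ) : ℝ := (1 + 2 * z) * (1 + z) ^ m + z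

lemma IA_pair {H : SimpleGraph V} {a b : V} (hab : H.Adj a b) (z : ℝ) :
    IA H {a, b} z = 1 + 2 * z := by
  have h0 : ∀ v : V, IA H {v} z = 1 + z := fun v => by
    have := IA_insert_isolated H (A := ∅) (v := v) (by simp) (by simp) z
    simpa [IA_empty] using this
  rw [IA_insert H (by simpa using hab.ne), h0]
  have : ({b} : Finset V).filter (fun u => ¬ H.Adj a u) = ∅ := by
    simp [Finset.filter_singleton, hab]
  rw [this, IA_empty]; ring

lemma IA_edge_isolated {H : SimpleGraph V} {a b : V} (hab : H.Adj a b) (A : Finset V)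
    (ha : a ∉ A) (hb : b ∉ A) (h : ∀ v ∈ A, ∀ x ∈ A ∪ {a, b}, ¬ H.Adj v x) (z : ℝ) :
    IA H (A ∪ {a, b}) z = (1 + 2 * z) * (1 + z) ^ A.card := by
  induction A using Finset.induction_on with
  | empty => simp [IA_pair hab]
  | insert v A hv ih =>
    simp only [Finset.mem_insert, not_or] at ha hb
    have hv' : v ∉ A ∪ {a, b} := by simp [hv, Ne.symm ha.1, Ne.symm hb.1]
    rw [Finset.insert_union, IA_insert_isolated H hv' (fun u hu => h v (by simp) u
      (by rw [Finset.insert_union]; exact Finset.mem_insert_of_mem hu)),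
      ih ha.2 hb.2 (fun x hx y hy => h x (Finset.mem_insert_of_mem hx) y
      (by rw [Finset.insert_union]; exact Finset.mem_insert_of_mem hy)),
      Finset.card_insert_of_notMem hv]
    ring

/-- To the right of its largest root, the polynomial of a vertex set containing an edge is at most
that of this edge together with isolated vertices. -/
lemma IA_edge_le {H : SimpleGraph V} {a b : V} (hab : H.Adj a b) {z : ℝ} (hz : z ≤ 0)
    (hz1 : 0 ≤ 1 + z) (A : Finset V) (ha : a ∉ A) (hb : b ∉ A)
    (hp : Pos (IA H (A ∪ {a, b})) z) :
    IA H (A ∪ {a, b}) z ≤ (1 + 2 * z) * (1 + z) ^ A.card := by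
  induction A using Finset.induction_on with
  | empty => simp [IA_pair hab]
  | insert v A hv ih =>
    simp only [Finset.mem_insert, not_or] at ha hb
    have hv' : v ∉ A ∪ {a, b} := by simp [hv, Ne.symm ha.1, Ne.symm hb.1]
    rw [Finset.insert_union] at hp ⊢
    have hp' := (hp.subset _ _ (Finset.subset_insert _ _)).1
    have h1 := ih ha.2 hb.2 hp'
    have h2 := (hp'.subset _ _ (Finset.filter_subset (fun u => ¬ H.Adj v u) _)).2 z le_rfl hz
    rw [IA_insert H hv', Finset.card_insert_of_notMem hv, pow_succ]
    nlinarith [mul_le_mul_of_nonneg_left h1 hz1, mul_nonneg (neg_nonneg.2 hz) (sub_nonneg.2 h2)]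

lemma Ugraph_adj_zero {m : ℕ} (i : Fin (m + 3)) : (Ugraph (m + 3)).Adj 0 i ↔ i ≠ 0 := by
  simp only [Ugraph, fromRel_adj, Fin.val_zero]
  constructor
  · exact fun h => h.1.symm
  · exact fun h => ⟨h.symm, by simp⟩

lemma Ugraph_adj_of_ne {m : ℕ} {i j : Fin (m + 3)} (hi : i ≠ 0) (hj : j ≠ 0) :
    (Ugraph (m + 3)).Adj i j ↔ (i = 1 ∧ j = 2) ∨ (i = 2 ∧ j = 1) := by
  have hi' : i.val ≠ 0 := fun h => hi (Fin.ext h)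
  have hj' : j.val ≠ 0 := fun h => hj (Fin.ext h)
  have h2 : ((2 : Fin (m + 3)) : ℕ) = 2 := by simp
  simp only [Ugraph, fromRel_adj, Fin.ext_iff, Fin.val_one, h2, ne_eq]
  omega

lemma fin_one_ne_two (m : ℕ) : (1 : Fin (m + 3)) ≠ 2 := by
  simp only [ne_eq, Fin.ext_iff]; simp [Nat.mod_eq_of_lt (show 2 < m + 3 by omega)]

lemma fin_two_ne_zero (m : ℕ) : (2 : Fin (m + 3)) ≠ 0 := by
  simp only [ne_eq, Fin.ext_iff]; simp [Nat.mod_eq_of_lt (show 2 < m + 3 by omega)]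

/-- Any graph with a vertex `o` joined to all others, and exactly one edge `ab` away from `o`,
has the polynomial of `U_(m+3)`. -/
lemma IA_of_dominating [Fintype V] {H : SimpleGraph V} {o a b : V} {m : ℕ}
    (hV : Fintype.card V = m + 3) (ho : ∀ x, H.Adj o x ↔ x ≠ o) (ha : a ≠ o) (hb : b ≠ o)
    (hab : a ≠ b) (h : ∀ x y, x ≠ o → y ≠ o → (H.Adj x y ↔ (x = a ∧ y = b) ∨ (x = b ∧ y = a)))
    (z : ℝ) : IA H Finset.univ z = uPoly m z := by
  rw [IA_erase _ (Finset.mem_univ o)]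
  have h1 : (Finset.univ.erase o).filter (fun u => ¬ H.Adj o u) = ∅ := by
    ext x; simp [ho]
  set A := (Finset.univ : Finset V) \ {o, a, b} with hA
  have h2 : Finset.univ.erase o = A ∪ {a, b} := by
    ext x
    by_cases hx1 : x = a
    · simp [hx1, ha]
    by_cases hx2 : x = b
    · simp [hx2, hb]
    simp [hA, hx1, hx2]
  have hc : A.card = m := by
    have h3 : ({o, a, b} : Finset V).card = 3 :=
      Finset.card_eq_three.2 ⟨o, a, b, ha.symm, hb.symm, hab, rfl⟩
    rw [hA, Finset.card_univ_sdiff, h3, hV]; simp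
  rw [h1, h2, IA_edge_isolated ((h a b ha hb).2 (by simp)) A
    (by simp [hA]) (by simp [hA]) ?_, IA_empty, hc, uPoly, mul_one]
  intro v hv x hx
  rw [← h2] at hx
  simp only [hA, Finset.mem_sdiff, Finset.mem_univ, true_and, Finset.mem_insert,
    Finset.mem_singleton, not_or] at hv
  rw [h v x hv.1 (by simpa using hx)]
  tauto

lemma IA_Ugraph (m : ℕ) (z : ℝ) : IA (Ugraph (m + 3)) Finset.univ z = uPoly m z :=
  IA_of_dominating (by simp) Ugraph_adj_zero (by simp) (fin_two_ne_zero m) (fin_one_ne_two m)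
    (fun _ _ => Ugraph_adj_of_ne) z

lemma Ugraph_connected (m : ℕ) : (Ugraph (m + 3)).Connected := by
  have : ∀ i, (Ugraph (m + 3)).Reachable 0 i := by
    intro i
    by_cases hi : i = 0
    · rw [hi]
    · exact ((Ugraph_adj_zero i).2 hi).reachable
  exact ⟨fun i j => (this i).symm.trans (this j)⟩

lemma Ugraph_ncard (m : ℕ) : (Ugraph (m + 3)).edgeSet.ncard = m + 3 := by
  have h02 := fin_two_ne_zero m
  have h01 : (1 : Fin (m + 3)) ≠ 0 := by simp
  have he : (Ugraph (m + 3)).edgeSet = insert s(1, 2) ((fun i => s(0, i)) '' {0}ᶜ) := by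
    ext e
    induction e with
    | _ i j =>
    simp only [mem_edgeSet, Set.mem_insert_iff, Set.mem_image, Set.mem_compl_iff,
      Set.mem_singleton_iff, Sym2.eq_iff]
    by_cases hi : i = 0
    · subst hi
      rw [Ugraph_adj_zero]
      constructor
      · exact fun h => Or.inr ⟨j, h, by simp⟩
      · rintro (h | ⟨k, hk, h⟩)
        · exact absurd h (by simp [h01.symm, h02.symm])
        · rcases h with h | h
          · exact h.2 ▸ hk
          · exact absurd h.2 hk
    by_cases hj : j = 0
    · subst hj
      rw [adj_comm, Ugraph_adj_zero]
      exact ⟨fun h => Or.inr ⟨i, h, by simp⟩, fun _ => hi⟩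
    rw [Ugraph_adj_of_ne hi hj]
    constructor
    · exact Or.inl
    · rintro (h | ⟨k, hk, h | h⟩)
      · exact h
      · exact absurd h.1.symm hi
      · exact absurd h.1.symm hj
  rw [he, Set.ncard_insert_of_notMem _ (Set.toFinite _), Set.ncard_image_of_injective,
    Set.ncard_compl, Set.ncard_singleton]
  · simp
  · intro i j h
    rcases Sym2.eq_iff.1 h with h | h
    · exact h.2
    · exact h.2.trans h.1
  · simp [h01.symm, h02.symm]

lemma uPoly_half {m : ℕ} {z : ℝ} (hp : Pos (uPoly m) z) : -1 / 2 < z := by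
  by_contra h
  have := hp (-1 / 2) (not_lt.1 h) (by norm_num)
  norm_num [uPoly] at this

lemma uPoly_succ (m : ℕ) (z : ℝ) :
    uPoly (m + 1) z = uPoly m z + z * ((1 + 2 * z) * (1 + z) ^ m) := by
  simp only [uPoly]; ring

/-- Among connected unicyclic graphs of given order `U_(m+3)` has the smallest independence
polynomial. If there is a leaf `v` with neighbour `w`, the induction hypothesis applies to `H - v`,
and `H - v - w` contains an edge, which bounds its polynomial. Without leaves the graph is a
cycle and `IA_le_cycle` applies to `U_(m+3)`. -/
theorem uPoly_le_IA.{u} (m : ℕ) : ∀ (V : Type u) [Fintype V] (H : SimpleGraph V), H.Connected →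
    H.edgeSet.ncard = Fintype.card V → Fintype.card V = m + 3 → ∀ z, z ≤ 0 →
    Pos (uPoly m) z → uPoly m z ≤ IA H Finset.univ z := by
  induction m with
  | zero =>
    intro V _ H hH he hV z hz hp
    have hdeg : ∀ v, H.degree v = 2 := by
      have hle : ∀ v ∈ Finset.univ, H.degree v ≤ 2 := fun v _ => by
        have := H.degree_lt_card_verts v; omega
      have : ∑ v, H.degree v = ∑ v : V, 2 := by
        rw [sum_degree_eq, he]; simp [mul_comm]
      exact fun v => (Finset.sum_eq_sum_iff_of_le hle).1 this v (Finset.mem_univ v)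
    rw [IA_of_two_regular hH hdeg z (m := 0) hV]
    simp [uPoly, Q]; linarith
  | succ m ih =>
    intro V _ H hH he hV z hz hp
    by_cases hl : ∀ v, H.degree v ≠ 1
    · rw [IA_of_two_regular hH (two_regular_of_no_leaf hH (by omega) he hl) z hV,
        ← IA_Ugraph]
      refine IA_le_cycle (by simp) _ _ (Ugraph_connected _) ?_ rfl z hz ?_
      · rw [Ugraph_ncard]; simp
      · intro t h1 h2; rw [IA_Ugraph]; exact hp t h1 h2
    push Not at hl
    obtain ⟨v, hv⟩ := hl
    have hhalf := uPoly_half hp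
    have hp' : Pos (uPoly m) z := by
      intro t h1 h2
      have h3 := hp t h1 h2
      rw [uPoly_succ] at h3
      have : 0 ≤ (1 + 2 * t) * (1 + t) ^ m := by
        have : 0 ≤ 1 + 2 * t := by linarith
        have : 0 ≤ 1 + t := by linarith
        positivity
      nlinarith
    have hK := hH.induce_compl_singleton_of_degree_eq_one hv
    have hKV : Fintype.card ({v}ᶜ : Set V) = m + 3 := by
      rw [Fintype.card_compl_set]; simp [hV]
    have hKe : (H.induce ({v}ᶜ : Set V)).edgeSet.ncard = Fintype.card ({v}ᶜ : Set V) := by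
      have := H.card_edgeFinset_induce_compl_singleton v
      rw [← coe_edgeFinset, Set.ncard_coe_finset, hKV]
      rw [← coe_edgeFinset, Set.ncard_coe_finset, hV] at he
      rw [H.card_edgeFinset_deleteIncidenceSet v, hv, he] at this
      convert this using 1
      omega
    have hKI : ∀ t, IA (H.induce ({v}ᶜ : Set V)) Finset.univ t = IA H (Finset.univ.erase v) t := by
      intro t
      rw [IA_map (H.induce ({v}ᶜ : Set V)) H (Function.Embedding.subtype _) Finset.univ
        (fun _ _ _ _ => by simp)]
      congr 1
      ext x; simp
    have hle : ∀ t, z ≤ t → t ≤ 0 → uPoly m t ≤ IA H (Finset.univ.erase v) t := by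
      intro t h1 h2
      rw [← hKI]
      exact ih _ _ hK hKe hKV t h2 (hp'.mono h1)
    have hpos : Pos (IA H (Finset.univ.erase v)) z :=
      fun t h1 h2 => (hp' t h1 h2).trans_le (hle t h1 h2)
    obtain ⟨w, hvw, hw⟩ := degree_eq_one_iff_existsUnique_adj.1 hv
    have hedge : ∃ a b, H.Adj a b ∧ a ≠ w ∧ b ≠ w := by
      by_contra hcon
      push Not at hcon
      have hsub : H.edgeSet ⊆ (H.incidenceFinset w : Set (Sym2 V)) := by
        intro e hee
        induction e with
        | _ a b =>
        rw [mem_edgeSet] at hee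
        rw [Finset.mem_coe, mem_incidenceFinset, mk'_mem_incidenceSet_iff]
        refine ⟨hee, ?_⟩
        by_cases h : a = w
        · exact Or.inl h.symm
        · exact Or.inr (hcon a b hee h).symm
      have := Set.ncard_le_ncard hsub (Set.toFinite _)
      rw [Set.ncard_coe_finset, card_incidenceFinset_eq_degree, he] at this
      exact absurd (H.degree_lt_card_verts w) (not_lt.2 this)
    obtain ⟨a, b, hab, haw, hbw⟩ := hedge
    have hav : a ≠ v := fun h => hbw (hw b (h ▸ hab))
    have hbv : b ≠ v := fun h => haw (hw a (h ▸ hab.symm))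
    set A : Finset V := Finset.univ \ {v, w, a, b} with hA
    have hset : (Finset.univ.erase v).filter (fun u => ¬ H.Adj v u) = A ∪ {a, b} := by
      ext x
      have : H.Adj v x ↔ x = w := ⟨hw x, fun h => h ▸ hvw⟩
      simp only [Finset.mem_filter, Finset.mem_erase, Finset.mem_univ, and_true, this, hA,
        Finset.mem_union, Finset.mem_sdiff, true_and, Finset.mem_insert, Finset.mem_singleton]
      by_cases hxa : x = a
      · simp [hxa, hav, haw]
      by_cases hxb : x = b
      · simp [hxb, hbv, hbw]
      simp [hxa, hxb]
    have hcard : A.card = m := by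
      have : ({v, w, a, b} : Finset V).card = 4 := by
        rw [Finset.card_insert_of_notMem, Finset.card_insert_of_notMem, Finset.card_pair hab.ne]
        · simp [haw.symm, hbw.symm]
        · simp [hvw.ne, hav.symm, hbv.symm]
      rw [hA, Finset.card_univ_sdiff, this, hV]; omega
    have h1 := IA_edge_le hab hz (by linarith) A (by simp [hA]) (by simp [hA])
      (hset ▸ (hpos.subset _ _ (Finset.filter_subset _ _)).1)
    rw [hcard, ← hset] at h1
    rw [IA_erase H (Finset.mem_univ v), uPoly_succ]
    have h2 := hle z le_rfl hz
    nlinarith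

/-! ### Coronas -/

/-- The vertex recurrence with the three vertex sets given by their membership conditions. -/
lemma IA_split (G : SimpleGraph V) {A A' A'' : Finset V} {v : V} (hv : v ∉ A)
    (h' : ∀ y, y ∈ A' ↔ y = v ∨ y ∈ A) (h'' : ∀ y, y ∈ A'' ↔ y ∈ A ∧ ¬ G.Adj v y) (x : ℝ) :
    IA G A' x = IA G A x + x * IA G A'' x := by
  have e1 : A' = insert v A := by ext y; rw [h' y, Finset.mem_insert]
  have e2 : A'' = A.filter (fun y => ¬ G.Adj v y) := by ext y; rw [h'' y, Finset.mem_filter]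
  rw [e1, e2, IA_insert G hv]

lemma corona_adj_inl_inl {H : SimpleGraph V} {u v : V} :
    (corona H).Adj (Sum.inl u) (Sum.inl v) ↔ H.Adj u v := by
  simp only [corona, fromRel_adj, ne_eq, Sum.inl.injEq]
  exact ⟨fun h => h.2.elim id fun h => h.symm, fun h => ⟨h.ne, Or.inl h⟩⟩

lemma corona_adj_inl_inr {H : SimpleGraph V} {u v : V} :
    (corona H).Adj (Sum.inl u) (Sum.inr v) ↔ u = v := by
  simp [corona]

lemma corona_adj_inr_inl {H : SimpleGraph V} {u v : V} :
    (corona H).Adj (Sum.inr u) (Sum.inl v) ↔ v = u := by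
  simp [corona]

lemma corona_not_adj_inr_inr {H : SimpleGraph V} {u v : V} :
    ¬ (corona H).Adj (Sum.inr u) (Sum.inr v) := by
  simp [corona]

lemma IA_corona_split (H : SimpleGraph V) {A : Finset V} {v : V} (hv : v ∉ A) (B : Finset V)
    (x : ℝ) : IA (corona H) ((insert v A).disjSum B) x = IA (corona H) (A.disjSum B) x +
      x * IA (corona H) ((A.filter (fun u => ¬ H.Adj v u)).disjSum (B.erase v)) x := by
  refine IA_split (corona H) (v := Sum.inl v) (by simpa using hv) ?_ ?_ x
  · rintro (y | y) <;> simp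
  · rintro (y | y)
    · simp [corona_adj_inl_inl]
    · simp [corona_adj_inl_inr, and_comm, eq_comm]

lemma IA_corona_isolated (H : SimpleGraph V) {A B : Finset V} {v : V} (hvA : v ∉ A) (hvB : v ∈ B)
    (x : ℝ) : IA (corona H) (A.disjSum B) x = (1 + x) * IA (corona H) (A.disjSum (B.erase v)) x := by
  rw [IA_split (corona H) (A := A.disjSum (B.erase v)) (A'' := A.disjSum (B.erase v))
    (v := Sum.inr v) (by simp) ?_ ?_ x]
  · ring
  · rintro (y | y)
    · simp
    · by_cases h : y = v
      · simp [h, hvB]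
      · simp [h]
  · rintro (y | y)
    · simp only [Finset.inl_mem_disjSum, corona_adj_inr_inl, iff_self_and]
      rintro h rfl
      exact hvA h
    · simp [corona_not_adj_inr_inr]

lemma IA_corona_empty (H : SimpleGraph V) (B : Finset V) (x : ℝ) :
    IA (corona H) ((∅ : Finset V).disjSum B) x = (1 + x) ^ B.card := by
  induction B using Finset.induction_on with
  | empty => simp [IA_empty]
  | insert v B hv ih =>
    rw [IA_corona_isolated H (v := v) (by simp) (by simp), Finset.erase_insert hv, ih,
      Finset.card_insert_of_notMem hv, pow_succ']

lemma IA_corona_disjSum (H : SimpleGraph V) {x : ℝ} (hx : 1 + x ≠ 0) (A : Finset V) :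
    ∀ B, A ⊆ B →
      IA (corona H) (A.disjSum B) x = (1 + x) ^ B.card * IA H A (x / (1 + x)) := by
  induction A using Finset.strongInduction with
  | H A ih =>
  intro B hAB
  rcases A.eq_empty_or_nonempty with rfl | ⟨v, hv⟩
  · rw [IA_corona_empty, IA_empty, mul_one]
  obtain ⟨k, hk⟩ : ∃ k, B.card = k + 1 :=
    ⟨B.card - 1, (Nat.sub_add_cancel (Finset.card_pos.2 ⟨v, hAB hv⟩)).symm⟩
  have hss := Finset.erase_ssubset hv
  have hfs : (A.erase v).filter (fun u => ¬ H.Adj v u) ⊆ A.erase v := Finset.filter_subset _ _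
  rw [IA_erase H hv]
  conv_lhs => rw [← Finset.insert_erase hv]
  rw [IA_corona_split H (Finset.notMem_erase v A), ih _ hss B (hss.1.trans hAB),
    ih _ (hfs.trans_ssubset hss) (B.erase v) (hfs.trans (Finset.erase_subset_erase v hAB)),
    Finset.card_erase_of_mem (hAB hv), hk, Nat.add_sub_cancel, pow_succ]
  field_simp

/-- The identity `I(H*, x) = (1 + x)^n I(H, x / (1 + x))`. -/
lemma IA_corona [Fintype V] (H : SimpleGraph V) {x : ℝ} (hx : 1 + x ≠ 0) :
    IA (corona H) Finset.univ x =
      (1 + x) ^ Fintype.card V * IA H Finset.univ (x / (1 + x)) := by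
  rw [← Finset.univ_disjSum_univ, IA_corona_disjSum H hx _ _ le_rfl, Finset.card_univ]

/-- Two adjacent vertices of `H` make `-1` a root of `I(H*, ·)`. -/
lemma IA_corona_neg_one [Fintype V] {H : SimpleGraph V} {u v : V} (huv : H.Adj u v) :
    IA (corona H) Finset.univ (-1) = 0 := by
  have h := IA_corona_split H (Finset.notMem_erase u Finset.univ) Finset.univ (-1)
  rw [Finset.insert_erase (Finset.mem_univ u), Finset.univ_disjSum_univ] at h
  have h1 := IA_corona_isolated H (A := Finset.univ.erase u) (B := Finset.univ) (v := u)
    (by simp) (by simp) (-1)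
  have h2 := IA_corona_isolated H (A := (Finset.univ.erase u).filter (fun y => ¬ H.Adj u y))
    (B := Finset.univ.erase u) (v := v) (by simp [huv]) (by simp [huv.ne']) (-1)
  rw [h, h1, h2]
  ring

/-- Positivity comparisons pass to coronas: `x ↦ x / (1 + x)` maps `(-1, 0]` increasingly onto
`(-∞, 0]`, with inverse `s ↦ s / (1 - s)`. -/
lemma corona_pos [Fintype V] [Fintype W] {H : SimpleGraph V} {K : SimpleGraph W} {u v : V}
    (huv : H.Adj u v)
    (h : ∀ y, y ≤ 0 → Pos (IA H Finset.univ) y → Pos (IA K Finset.univ) y) {x : ℝ} (hx : x ≤ 0)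
    (hp : Pos (IA (corona H) Finset.univ) x) : Pos (IA (corona K) Finset.univ) x := by
  have hx1 : -1 < x := by
    by_contra hcon
    have := hp (-1) (not_lt.1 hcon) (by norm_num)
    rw [IA_corona_neg_one huv] at this
    exact lt_irrefl _ this
  have h1x : 0 < 1 + x := by linarith
  have hH : Pos (IA H Finset.univ) (x / (1 + x)) := by
    intro s h1 h2
    have h1s : 0 < 1 - s := by linarith
    have h3 : 1 + s / (1 - s) = 1 / (1 - s) := by field_simp; ring
    have h4 : 0 < 1 + s / (1 - s) := by rw [h3]; positivity
    have h5 : x ≤ s / (1 - s) := by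
      rw [le_div_iff₀ h1s]
      rw [div_le_iff₀ h1x] at h1
      linarith
    have h6 := hp (s / (1 - s)) h5 (div_nonpos_of_nonpos_of_nonneg h2 h1s.le)
    rw [IA_corona H h4.ne'] at h6
    have h7 : s / (1 - s) / (1 + s / (1 - s)) = s := by rw [h3]; field_simp
    rw [h7] at h6
    exact (mul_pos_iff_of_pos_left (by positivity)).1 h6
  have hK := h _ (div_nonpos_of_nonpos_of_nonneg hx h1x.le) hH
  intro t h1 h2
  have h1t : 0 < 1 + t := by linarith
  rw [IA_corona K h1t.ne']
  refine mul_pos (by positivity) (hK _ ?_ (div_nonpos_of_nonpos_of_nonneg h2 h1t.le))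
  rw [div_le_div_iff₀ h1x h1t]
  linarith

/-! ### Matchings in well-covered graphs -/

/-- A unicyclic graph of order `2n` has an independent set of size `n`: a spanning tree misses one
edge, and from a 2-colouring of that tree either the class avoiding a chosen end `u` of the edge, or
the other class without `u`, is large enough. -/
lemma exists_large_indep [Fintype V] {G : SimpleGraph V} {n : ℕ} (hV : Fintype.card V = 2 * n)
    (hG : Unicyclic G) : ∃ S, IsIndepFinset G S ∧ n ≤ S.card := by
  obtain ⟨T, hTG, hT⟩ := hG.1.exists_isTree_le
  have hTe := hT.card_edgeFinset
  have hGe := hG.2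
  rw [← coe_edgeFinset, Set.ncard_coe_finset] at hGe
  have hsub : T.edgeFinset ⊆ G.edgeFinset := edgeFinset_mono hTG
  have hd := Finset.card_sdiff_add_card_eq_card hsub
  obtain ⟨e, he⟩ := Finset.card_eq_one.1
    (show (G.edgeFinset \ T.edgeFinset).card = 1 by omega)
  obtain ⟨u, hu⟩ : ∃ u, ∀ x y, G.Adj x y → ¬ T.Adj x y → x = u ∨ y = u := by
    induction e with
    | _ u v =>
    refine ⟨u, fun x y hxy hT => ?_⟩
    have : s(x, y) ∈ G.edgeFinset \ T.edgeFinset := by simp [hxy, hT]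
    rw [he, Finset.mem_singleton, Sym2.eq_iff] at this
    tauto
  obtain ⟨c⟩ := hT.colorable_two
  set A := Finset.univ.filter (fun x => c x = c u) with hA
  set B := Finset.univ.filter (fun x => ¬ c x = c u) with hB
  have hAB : A.card + B.card = 2 * n := by
    rw [← hV, ← Finset.card_univ]; exact Finset.card_filter_add_card_filter_not _
  by_cases hn : n + 1 ≤ A.card
  · refine ⟨A.erase u, ?_, ?_⟩
    · intro x hx y hy hxy
      simp only [hA, Finset.mem_erase, Finset.mem_filter, Finset.mem_univ, true_and] at hx hy
      by_cases h : T.Adj x y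
      · exact c.valid h (hx.2.trans hy.2.symm)
      · rcases hu x y hxy h with h | h
        · exact hx.1 h
        · exact hy.1 h
    · rw [Finset.card_erase_of_mem (by simp [hA])]; omega
  · refine ⟨B, ?_, by omega⟩
    intro x hx y hy hxy
    simp only [hB, Finset.mem_filter, Finset.mem_univ, true_and] at hx hy
    by_cases h : T.Adj x y
    · have := c.valid h
      omega
    · rcases hu x y hxy h with rfl | rfl
      · exact hx rfl
      · exact hy rfl

lemma indep_mono {G : SimpleGraph V} {S T : Finset V} (hT : IsIndepFinset G T)
    (h : S ⊆ T) : IsIndepFinset G S := fun u hu v hv => hT u (h hu) v (h hv)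

lemma isIndepFinset_insert {G : SimpleGraph V} {S : Finset V} {v : V} (hS : IsIndepFinset G S)
    (h : ∀ x ∈ S, ¬ G.Adj v x) : IsIndepFinset G (insert v S) := by
  intro x hx y hy hxy
  rcases Finset.mem_insert.1 hx with rfl | hx' <;> rcases Finset.mem_insert.1 hy with rfl | hy'
  · exact G.loopless.irrefl _ hxy
  · exact h y hy' hxy
  · exact h x hx' hxy.symm
  · exact hS x hx' y hy' hxy

lemma exists_maximal_indep {G : SimpleGraph V} (B : Finset V) {S : Finset V} (hSB : S ⊆ B)
    (hS : IsIndepFinset G S) : ∃ T, S ⊆ T ∧ T ⊆ B ∧ IsIndepFinset G T ∧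
      ∀ v ∈ B, v ∉ T → ∃ x ∈ T, G.Adj v x := by
  obtain ⟨T, hT, hmax⟩ := Finset.exists_max_image
    (B.powerset.filter (fun T => S ⊆ T ∧ IsIndepFinset G T)) Finset.card
    ⟨S, by simp [hSB, hS]⟩
  simp only [Finset.mem_filter, Finset.mem_powerset] at hT hmax
  refine ⟨T, hT.2.1, hT.1, hT.2.2, fun v hvB hvT => ?_⟩
  by_contra hcon
  push Not at hcon
  have := hmax (insert v T) ⟨Finset.insert_subset hvB hT.1,
    hT.2.1.trans (Finset.subset_insert _ _), isIndepFinset_insert hT.2.2 hcon⟩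
  rw [Finset.card_insert_of_notMem hvT] at this
  omega

/-- The form of well-coveredness used below: every independent set extends to one of the common
size `α` of the maximal independent sets. -/
lemma wellCovered_exists_size [Fintype V] {G : SimpleGraph V} (h : WellCovered G) :
    ∃ α, ∀ S, IsIndepFinset G S → ∃ T, S ⊆ T ∧ IsIndepFinset G T ∧ T.card = α := by
  have hmax : ∀ T, (∀ v ∈ Finset.univ, v ∉ T → ∃ x ∈ T, G.Adj v x) →
      ∀ v ∉ T, ¬ IsIndepFinset G (insert v T) := by
    intro T hT v hv hi
    obtain ⟨x, hx, hvx⟩ := hT v (Finset.mem_univ v) hv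
    exact hi v (Finset.mem_insert_self _ _) x (Finset.mem_insert_of_mem hx) hvx
  obtain ⟨T₀, -, -, h1, h2⟩ := exists_maximal_indep (G := G) Finset.univ
    (Finset.subset_univ ∅) (by simp [IsIndepFinset])
  refine ⟨T₀.card, fun S hS => ?_⟩
  obtain ⟨T, hST, -, h3, h4⟩ := exists_maximal_indep (G := G) Finset.univ (Finset.subset_univ S) hS
  exact ⟨T, hST, h3, h T T₀ h3 (hmax T h4) h1 (hmax T₀ h2)⟩

/-- In a well-covered graph without isolated vertices every independent set satisfies Hall's
condition. Let `K` be a maximal independent subset of `N(X)`, `T` a maximal independent set containing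
`K` and the part `X₁` of `X` not adjacent to `K`, and `X₂ = X - X₁`. Exchanging `K` for `X₂` in `T`
shows `|X₂| ≤ |K|`; induction handles `X₁`, whose neighbours avoid `K`. -/
lemma hall_condition [Fintype V] {G : SimpleGraph V} {α : ℕ}
    (hα : ∀ S, IsIndepFinset G S → ∃ T, S ⊆ T ∧ IsIndepFinset G T ∧ T.card = α)
    (hni : ∀ v, ∃ x, G.Adj v x) (X : Finset V) : IsIndepFinset G X →
    X.card ≤ (X.biUnion fun v => G.neighborFinset v).card := by
  induction X using Finset.strongInduction with
  | H X ih =>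
  intro hX
  rcases X.eq_empty_or_nonempty with rfl | ⟨x₀, hx₀⟩
  · simp
  set N := X.biUnion fun v => G.neighborFinset v with hN
  have memN : ∀ y, y ∈ N ↔ ∃ x ∈ X, G.Adj x y := by intro y; simp [hN]
  obtain ⟨K, -, hKN, hK, hKmax⟩ := exists_maximal_indep (G := G) N (Finset.empty_subset _)
    (by simp [IsIndepFinset])
  have hKne : ∃ k, k ∈ K := by
    obtain ⟨y, hy⟩ := hni x₀
    by_cases h : y ∈ K
    · exact ⟨y, h⟩
    · obtain ⟨k, hk, -⟩ := hKmax y ((memN y).2 ⟨x₀, hx₀, hy⟩) h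
      exact ⟨k, hk⟩
  set X₁ := X.filter (fun x => ¬ ∃ k ∈ K, G.Adj k x) with hX₁
  set X₂ := X.filter (fun x => ∃ k ∈ K, G.Adj k x) with hX₂
  have hcard : X₂.card + X₁.card = X.card := Finset.card_filter_add_card_filter_not _
  have hX₁X : X₁ ⊂ X := by
    obtain ⟨k, hk⟩ := hKne
    obtain ⟨x, hx, hxk⟩ := (memN k).1 (hKN hk)
    refine (Finset.ssubset_iff_of_subset (Finset.filter_subset _ _)).2 ⟨x, hx, ?_⟩
    simp only [Finset.mem_filter, not_and, not_not]
    exact fun _ => ⟨k, hk, hxk.symm⟩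
  obtain ⟨T, hsub, hT, hTα⟩ := hα (K ∪ X₁) (by
    intro x hx y hy hxy
    simp only [hX₁, Finset.mem_union, Finset.mem_filter] at hx hy
    rcases hx with hx | hx <;> rcases hy with hy | hy
    · exact hK x hx y hy hxy
    · exact hy.2 ⟨x, hx, hxy⟩
    · exact hx.2 ⟨y, hy, hxy.symm⟩
    · exact hX x hx.1 y hy.1 hxy)
  have hKT : K ⊆ T := Finset.subset_union_left.trans hsub
  have hTN : ∀ y ∈ T \ K, y ∉ N := by
    intro y hy hyN
    obtain ⟨hyT, hyK⟩ := Finset.mem_sdiff.1 hy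
    obtain ⟨k, hk, hyk⟩ := hKmax y hyN hyK
    exact hT y hyT k (hKT hk) hyk
  have hind : IsIndepFinset G ((T \ K) ∪ X₂) := by
    have hX₂X : ∀ x ∈ X₂, x ∈ X := fun x hx => Finset.mem_of_mem_filter x hx
    intro x hx y hy hxy
    rcases Finset.mem_union.1 hx with hx | hx <;> rcases Finset.mem_union.1 hy with hy | hy
    · exact hT x (Finset.mem_sdiff.1 hx).1 y (Finset.mem_sdiff.1 hy).1 hxy
    · exact hTN x hx ((memN x).2 ⟨y, hX₂X y hy, hxy.symm⟩)
    · exact hTN y hy ((memN y).2 ⟨x, hX₂X x hx, hxy⟩)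
    · exact hX x (hX₂X x hx) y (hX₂X y hy) hxy
  have hdisj : Disjoint (T \ K) X₂ := by
    refine Finset.disjoint_left.2 fun x hx hx2 => ?_
    obtain ⟨k, hk, hkx⟩ := (Finset.mem_filter.1 hx2).2
    exact hT k (hKT hk) x (Finset.mem_sdiff.1 hx).1 hkx
  obtain ⟨T', hT', -, hT'α⟩ := hα _ hind
  have h1 := Finset.card_le_card hT'
  rw [Finset.card_union_of_disjoint hdisj, hT'α, Finset.card_sdiff_of_subset hKT, hTα] at h1
  have h2 := Finset.card_le_card hKT
  have h3 := ih X₁ hX₁X (indep_mono hX hX₁X.1)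
  have h4 : (X₁.biUnion fun v => G.neighborFinset v) ⊆ N \ K := by
    intro y hy
    simp only [Finset.mem_biUnion, mem_neighborFinset] at hy
    obtain ⟨x, hx, hxy⟩ := hy
    obtain ⟨hxX, hxK⟩ := Finset.mem_filter.1 hx
    refine Finset.mem_sdiff.2 ⟨(memN y).2 ⟨x, hxX, hxy⟩, fun hyK => hxK ⟨y, hyK, hxy.symm⟩⟩
  have h5 := Finset.card_le_card h4
  rw [Finset.card_sdiff_of_subset hKN] at h5
  have h6 := Finset.card_le_card hKN
  omega

/-- A well-covered unicyclic graph of order `2n` has a perfect matching, encoded as the involution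
`σ` exchanging partners, such that any neighbour of a vertex is adjacent to any neighbour of its
partner. -/
theorem exists_matching [Fintype V] {G : SimpleGraph V} {n : ℕ} (hV : Fintype.card V = 2 * n)
    (hn : 3 ≤ n) (hG : Unicyclic G) (hwc : WellCovered G) :
    ∃ σ : V → V, (∀ v, σ (σ v) = v) ∧ (∀ v, G.Adj v (σ v)) ∧
      ∀ x a b, G.Adj x a → G.Adj (σ x) b → G.Adj a b := by
  obtain ⟨α, hα⟩ := wellCovered_exists_size hwc
  have hni : ∀ v, ∃ x, G.Adj v x := by
    intro v
    have : Nontrivial V := Fintype.one_lt_card_iff_nontrivial.1 (by omega)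
    have := hG.1.preconnected.degree_pos_of_nontrivial v
    exact (G.degree_pos_iff_exists_adj v).1 this
  obtain ⟨S₀, hS₀, hnS⟩ := exists_large_indep hV hG
  obtain ⟨S, hS₀S, hS, hSα⟩ := hα S₀ hS₀
  have hall : ∀ X : Finset S,
      X.card ≤ (X.biUnion fun v : S => G.neighborFinset (v : V)).card := by
    intro X
    have := hall_condition hα hni (X.map (Function.Embedding.subtype _)) (indep_mono hS (by
      intro x hx
      obtain ⟨y, -, rfl⟩ := Finset.mem_map.1 hx
      exact y.2))
    rw [Finset.card_map, Finset.map_eq_image, Finset.image_biUnion] at this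
    exact this
  obtain ⟨f, hfinj, hf⟩ := (Finset.all_card_le_biUnion_card_iff_exists_injective _).1 hall
  simp only [mem_neighborFinset] at hf
  have hfS : ∀ x : S, f x ∉ S := fun x hx => hS x x.2 _ hx (hf x)
  have him : (Finset.univ.image f).card = S.card := by
    rw [Finset.card_image_of_injective _ hfinj]; simp
  have hsub : Finset.univ.image f ⊆ Sᶜ := by
    intro y hy
    obtain ⟨x, -, rfl⟩ := Finset.mem_image.1 hy
    simpa using hfS x
  have hle := Finset.card_le_card hsub
  have hSn := Finset.card_le_card hS₀S
  rw [him, Finset.card_compl, hV] at hle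
  have hSn : S.card = n := by omega
  have hαn : α = n := by omega
  have heq : Finset.univ.image f = Sᶜ :=
    Finset.eq_of_subset_of_card_le hsub (by rw [him, Finset.card_compl, hV]; omega)
  have hsurj : ∀ y, y ∉ S → ∃ x : S, f x = y := by
    intro y hy
    have : y ∈ Finset.univ.image f := by rw [heq]; simpa using hy
    obtain ⟨x, -, hx⟩ := Finset.mem_image.1 this
    exact ⟨x, hx⟩
  choose g hg using hsurj
  have hgf : ∀ x : S, g (f x) (hfS x) = x := fun x => hfinj (hg _ _)
  set σ : V → V := fun v => if h : v ∈ S then f ⟨v, h⟩ else g v h with hσ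
  have hσ1 : ∀ v (h : v ∈ S), σ v = f ⟨v, h⟩ := fun v h => by simp [hσ, h]
  have hσ2 : ∀ v (h : v ∉ S), σ v = g v h := fun v h => by simp [hσ, h]
  have hinv : ∀ v, σ (σ v) = v := by
    intro v
    by_cases h : v ∈ S
    · rw [hσ1 v h, hσ2 _ (hfS _), hgf]
    · rw [hσ2 v h, hσ1 _ (g v h).2]; exact hg v h
  have hadj : ∀ v, G.Adj v (σ v) := by
    intro v
    by_cases h : v ∈ S
    · rw [hσ1 v h]; exact hf ⟨v, h⟩
    · rw [hσ2 v h]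
      have := hf (g v h)
      rw [hg v h] at this
      exact this.symm
  refine ⟨σ, hinv, hadj, fun x a b hxa hxb => ?_⟩
  by_contra hab
  have hnab : IsIndepFinset G {a, b} := by
    intro p hp q hq hpq
    simp only [Finset.mem_insert, Finset.mem_singleton] at hp hq
    rcases hp with rfl | rfl <;> rcases hq with rfl | rfl
    · exact G.loopless.irrefl _ hpq
    · exact hab hpq
    · exact hab hpq.symm
    · exact G.loopless.irrefl _ hpq
  obtain ⟨T, habT, hT, hTα⟩ := hα _ hnab
  have hσinj : Function.Injective σ := fun p q h => by rw [← hinv p, h, hinv]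
  have hdisj : Disjoint T (T.image σ) := by
    refine Finset.disjoint_left.2 fun p hp hp' => ?_
    obtain ⟨q, hq, rfl⟩ := Finset.mem_image.1 hp'
    exact hT q hq _ hp (hadj q)
  have huniv : T ∪ T.image σ = Finset.univ := by
    rw [← Finset.card_eq_iff_eq_univ, Finset.card_union_of_disjoint hdisj,
      Finset.card_image_of_injective _ hσinj, hV]
    omega
  have haT : a ∈ T := habT (by simp)
  have hbT : b ∈ T := habT (by simp)
  have hx : x ∈ T ∪ T.image σ := by rw [huniv]; simp
  rcases Finset.mem_union.1 hx with hx | hx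
  · exact hT x hx a haT hxa
  · obtain ⟨q, hq, rfl⟩ := Finset.mem_image.1 hx
    rw [hinv] at hxb
    exact hT q hq b hbT hxb

/-! ### Reduction to a corona -/

lemma IsAcyclic_no_square {G : SimpleGraph V} (h : G.IsAcyclic) {p q r s : V} (hpr : p ≠ r)
    (hqs : q ≠ s) (hpq : G.Adj p q) (hqr : G.Adj q r) (hrs : G.Adj r s) (hsp : G.Adj s p) :
    False := by
  have h1 : (Walk.cons hpq (Walk.cons hqr Walk.nil)).IsPath := by
    simp [hpq.ne, hqr.ne, hpr]
  have h2 : (Walk.cons hsp.symm (Walk.cons hrs.symm Walk.nil)).IsPath := by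
    simp [hsp.ne', hrs.ne', hpr]
  have := (h.subsingleton_path p r).elim ⟨_, h1⟩ ⟨_, h2⟩
  simp only [Subtype.mk.injEq, Walk.cons.injEq] at this
  exact hqs this.1

/-- Any edge of a 4-cycle of a unicyclic graph lies on every other 4-cycle: deleting the edge `pq` of the first leaves
a tree, so the second must use `pq`. -/
lemma square_unique [Fintype V] {G : SimpleGraph V} (hG : Unicyclic G) {p q r s : V}
    (hpr : p ≠ r) (hqs : q ≠ s) (hpq : G.Adj p q) (hqr : G.Adj q r) (hrs : G.Adj r s)
    (hsp : G.Adj s p) {p' q' r' s' : V} (hpr' : p' ≠ r') (hqs' : q' ≠ s') (hpq' : G.Adj p' q')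
    (hqr' : G.Adj q' r') (hrs' : G.Adj r' s') (hsp' : G.Adj s' p') :
    s(p', q') = s(p, q) ∨ s(q', r') = s(p, q) ∨ s(r', s') = s(p, q) ∨ s(s', p') = s(p, q) := by
  set D := G.deleteEdges {s(p, q)} with hD
  have hadj : ∀ {x y}, G.Adj x y → s(x, y) ≠ s(p, q) → D.Adj x y := fun {x y} h h' => by
    rw [hD, deleteEdges_adj]; exact ⟨h, h'⟩
  have hreach : D.Reachable p q := by
    have h1 : D.Adj p s := hadj hsp.symm (by
      intro h; rcases Sym2.eq_iff.1 h with h | h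
      · exact hqs h.2.symm
      · exact hpq.ne h.1)
    have h2 : D.Adj s r := hadj hrs.symm (by
      intro h; rcases Sym2.eq_iff.1 h with h | h
      · exact hsp.ne h.1
      · exact hpr h.2.symm)
    have h3 : D.Adj r q := hadj hqr.symm (by
      intro h; rcases Sym2.eq_iff.1 h with h | h
      · exact hpr h.1.symm
      · exact hpq.ne h.2.symm)
    exact h1.reachable.trans (h2.reachable.trans h3.reachable)
  have hconn : D.Connected := by
    have := hG.1.nonempty
    refine ⟨fun x y => ?_⟩
    obtain ⟨w⟩ := hG.1.preconnected x y
    induction w with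
    | nil => exact Reachable.refl _
    | cons h w ih =>
      rename_i y z _
      refine Reachable.trans ?_ ih
      by_cases he : s(y, z) = s(p, q)
      · rcases Sym2.eq_iff.1 he with ⟨rfl, rfl⟩ | ⟨rfl, rfl⟩
        · exact hreach
        · exact hreach.symm
      · exact (hadj h he).reachable
  have hcard : Nat.card D.edgeSet + 1 = Nat.card V := by
    have h1 : D.edgeSet = G.edgeSet \ {s(p, q)} := edgeSet_deleteEdges _
    rw [Nat.card_coe_set_eq, h1, Set.ncard_sdiff_singleton_add_one (by simpa using hpq)
      (Set.toFinite _), hG.2, Nat.card_eq_fintype_card]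
  have htree : D.IsTree := isTree_iff_connected_and_card.2 ⟨hconn, hcard⟩
  by_contra hcon
  push Not at hcon
  exact IsAcyclic_no_square htree.isAcyclic hpr' hqs' (hadj hpq' hcon.1) (hadj hqr' hcon.2.1)
    (hadj hrs' hcon.2.2.1) (hadj hsp' hcon.2.2.2)

lemma corona_connected [Fintype V] {H : SimpleGraph V} (h : (corona H).Connected) :
    H.Connected := by
  have key : ∀ a b : V ⊕ V, (corona H).Adj a b →
      H.Reachable (Sum.elim id id a) (Sum.elim id id b) := by
    rintro (a | a) (b | b) hab
    · exact (corona_adj_inl_inl.1 hab).reachable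
    · rw [corona_adj_inl_inr] at hab; subst hab; exact Reachable.refl _
    · rw [corona_adj_inr_inl] at hab; subst hab; exact Reachable.refl _
    · exact absurd hab corona_not_adj_inr_inr
  have hr : ∀ a b : V ⊕ V, H.Reachable (Sum.elim id id a) (Sum.elim id id b) := by
    intro a b
    obtain ⟨w⟩ := h.preconnected a b
    induction w with
    | nil => exact Reachable.refl _
    | cons hab w ih => exact (key _ _ hab).trans ih
  have : Nonempty V := h.nonempty.elim fun a => ⟨Sum.elim id id a⟩
  exact ⟨fun x y => hr (Sum.inl x) (Sum.inl y)⟩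

lemma corona_ncard [Fintype V] (H : SimpleGraph V) :
    (corona H).edgeSet.ncard = H.edgeSet.ncard + Fintype.card V := by
  have he : (corona H).edgeSet =
      Sym2.map Sum.inl '' H.edgeSet ∪ Set.range (fun v : V => s(Sum.inl v, Sum.inr v)) := by
    ext e
    constructor
    · induction e with
      | _ a b =>
      rw [mem_edgeSet]
      intro hab
      rcases a with a | a <;> rcases b with b | b
      · exact Or.inl ⟨s(a, b), corona_adj_inl_inl.1 hab, by simp⟩
      · rw [corona_adj_inl_inr] at hab; subst hab; exact Or.inr ⟨a, rfl⟩
      · rw [corona_adj_inr_inl] at hab; subst hab; exact Or.inr ⟨b, Sym2.eq_swap⟩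
      · exact absurd hab corona_not_adj_inr_inr
    · rintro (⟨e, he, rfl⟩ | ⟨v, rfl⟩)
      · induction e with
        | _ a b => exact corona_adj_inl_inl.2 he
      · exact (corona_adj_inl_inr (H := H)).2 rfl
  rw [he, Set.ncard_union_eq _ (Set.toFinite _) (Set.toFinite _),
    Set.ncard_image_of_injective _ (Sym2.map.injective Sum.inl_injective)]
  · congr 1
    rw [← Set.image_univ, Set.ncard_image_of_injective, Set.ncard_univ, Nat.card_eq_fintype_card]
    intro a b hab
    rcases Sym2.eq_iff.1 hab with h | h
    · exact Sum.inl_injective h.1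
    · simp at h
  · rw [Set.disjoint_left]
    rintro _ ⟨e, -, rfl⟩ ⟨v, hv⟩
    induction e with
    | _ a b => simp at hv

/-- A unicyclic graph with a perfect matching in which every matched pair contains a leaf is the
corona of a unicyclic graph, namely of its subgraph induced on the non-leaves. -/
lemma exists_corona_iso.{u} {V : Type u} [Fintype V] {G : SimpleGraph V} {n : ℕ}
    (hV : Fintype.card V = 2 * n) (hn : 3 ≤ n) (hG : Unicyclic G) {σ : V → V}
    (hinv : ∀ v, σ (σ v) = v) (hadj : ∀ v, G.Adj v (σ v))
    (hleaf : ∀ v, (∀ y, G.Adj v y → y = σ v) ∨ (∀ y, G.Adj (σ v) y → y = v)) :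
    ∃ (U : Type u) (_ : Fintype U) (H : SimpleGraph U), Unicyclic H ∧ Fintype.card U = n ∧
      Nonempty (corona H ≃g G) := by
  set core : V → Prop := fun v => ¬ ∀ y, G.Adj v y → y = σ v with hcore
  have hc1 : ∀ v, core v → ∀ y, G.Adj (σ v) y → y = v := fun v hv => (hleaf v).resolve_left hv
  have hc2 : ∀ v, ¬ core v → core (σ v) := by
    intro v hv h
    rw [hinv] at h
    have hv' : ∀ y, G.Adj v y → y = σ v := not_not.1 hv
    have huniv : ({v, σ v} : Finset V) = Finset.univ := by
      refine eq_univ_of_closed hG.1 (Finset.mem_insert_self _ _) ?_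
      intro a ha x hx
      simp only [Finset.mem_insert, Finset.mem_singleton] at ha ⊢
      rcases ha with rfl | rfl
      · exact Or.inr (hv' x hx)
      · exact Or.inl (h x hx)
    have := Finset.card_le_two (a := v) (b := σ v)
    rw [huniv, Finset.card_univ] at this
    omega
  have hc3 : ∀ v, core v → ¬ core (σ v) := by
    intro v hv h
    exact h fun y hy => by rw [hinv]; exact hc1 v hv y hy
  set e : {v // core v} ⊕ {v // core v} → V := Sum.elim (fun v => v) (fun v => σ v) with he
  have hσinj : Function.Injective σ := fun p q h => by rw [← hinv p, h, hinv]
  have hbij : Function.Bijective e := by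
    constructor
    · rintro (a | a) (b | b) hab
      · simp only [he, Sum.elim_inl] at hab
        rw [Subtype.ext hab]
      · simp only [he, Sum.elim_inl, Sum.elim_inr] at hab
        exact absurd a.2 (hab ▸ hc3 b b.2)
      · simp only [he, Sum.elim_inl, Sum.elim_inr] at hab
        exact absurd b.2 (hab ▸ hc3 a a.2)
      · simp only [he, Sum.elim_inr] at hab
        rw [Subtype.ext (hσinj hab)]
    · intro v
      by_cases hv : core v
      · exact ⟨Sum.inl ⟨v, hv⟩, rfl⟩
      · exact ⟨Sum.inr ⟨σ v, hc2 v hv⟩, hinv v⟩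
  set H : SimpleGraph {v // core v} := G.comap (fun v => (v : V)) with hH
  have hlr : ∀ a b : {v // core v}, G.Adj a (σ b) ↔ a = b := by
    intro a b
    constructor
    · exact fun h => Subtype.ext (hc1 b b.2 a h.symm)
    · rintro rfl; exact hadj a
  have hiso : ∀ a b, G.Adj (e a) (e b) ↔ (corona H).Adj a b := by
    rintro (a | a) (b | b)
    · rw [corona_adj_inl_inl]; rfl
    · rw [corona_adj_inl_inr]; exact hlr a b
    · rw [corona_adj_inr_inl, adj_comm]; exact hlr b a
    · refine iff_of_false (fun h => ?_) corona_not_adj_inr_inr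
      have h1 : σ (b : V) = a := hc1 a a.2 _ h
      exact hc3 b b.2 (h1 ▸ a.2)
  let φ : corona H ≃g G := ⟨Equiv.ofBijective e hbij, fun {a b} => hiso a b⟩
  have hcardU : Fintype.card {v // core v} = n := by
    have := Fintype.card_congr φ.toEquiv
    rw [Fintype.card_sum, hV] at this
    omega
  refine ⟨{v // core v}, inferInstance, H, ⟨corona_connected (φ.connected_iff.2 hG.1), ?_⟩,
    hcardU, ⟨φ⟩⟩
  have h1 := corona_ncard H
  have h2 : (corona H).edgeSet.ncard = G.edgeSet.ncard := by
    rw [← Nat.card_coe_set_eq, ← Nat.card_coe_set_eq]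
    exact Nat.card_congr φ.mapEdgeSet
  rw [h2, hG.2, hV] at h1
  omega

/-- A well-covered unicyclic graph of order `2n` has the independence polynomial of the corona of a
unicyclic graph of order `n`. If some matched pair `c, d` contains no leaf, then the neighbours `b` of
`c` and `a` of `d` complete it to the unique cycle `c b a d`, all other pairs contain a leaf, and replacing
the edge `ad` with `ac` turns `d` into a leaf without changing the polynomial. -/
theorem exists_corona_IA.{u} {V : Type u} [Fintype V] {G : SimpleGraph V} {n : ℕ}
    (hV : Fintype.card V = 2 * n) (hn : 3 ≤ n) (hG : Unicyclic G) (hwc : WellCovered G) :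
    ∃ (U : Type u) (_ : Fintype U) (H : SimpleGraph U), Unicyclic H ∧ Fintype.card U = n ∧
      ∀ x, IA G Finset.univ x = IA (corona H) Finset.univ x := by
  obtain ⟨σ, hinv, hadj, hfav⟩ := exists_matching hV hn hG hwc
  by_cases hleaf : ∀ v, (∀ y, G.Adj v y → y = σ v) ∨ (∀ y, G.Adj (σ v) y → y = v)
  · obtain ⟨U, _, H, h1, h2, ⟨φ⟩⟩ := exists_corona_iso hV hn hG hinv hadj hleaf
    exact ⟨U, _, H, h1, h2, fun x => (IA_univ_iso φ x).symm⟩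
  push Not at hleaf
  obtain ⟨c, ⟨b, hcb, hbd⟩, ⟨a, hda, hac⟩⟩ := hleaf
  have huniq : ∀ c b b' a, G.Adj c b → b ≠ σ c → G.Adj c b' → b' ≠ σ c → G.Adj (σ c) a → a ≠ c →
      b' = b := by
    intro c b b' a hcb hb hcb' hb' hda hac
    have hab := hfav c b a hcb hda
    have hab' := hfav c b' a hcb' hda
    have hdc := (hadj c).symm
    rcases square_unique hG hac.symm hb hcb hab hda.symm hdc hac.symm hb' hcb' hab' hda.symm hdc
      with h | h | h | h
    · rcases Sym2.eq_iff.1 h with h | h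
      · exact h.2
      · exact absurd h.1 hcb.ne
    · rcases Sym2.eq_iff.1 h with h | h
      · exact absurd h.1.symm hcb'.ne
      · exact h.1
    · rcases Sym2.eq_iff.1 h with h | h
      · exact absurd h.1 hac
      · exact absurd h.2 hdc.ne
    · rcases Sym2.eq_iff.1 h with h | h
      · exact absurd h.1 hdc.ne
      · exact absurd h.1.symm hb
  set d := σ c with hd
  have hdc : σ d = c := by rw [hd, hinv]
  have hcd : G.Adj c d := hadj c
  have hab : G.Adj b a := hfav c b a hcb hda
  have hNc : ∀ y, G.Adj c y → y = d ∨ y = b := by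
    intro y hy
    by_cases h : y = d
    · exact Or.inl h
    · exact Or.inr (huniq c b y a hcb hbd hy h hda hac)
  have hNd : ∀ y, G.Adj d y → y = c ∨ y = a := by
    intro y hy
    by_cases h : y = c
    · exact Or.inl h
    · exact Or.inr (huniq d a y b hda (by rw [hdc]; exact hac) hy (by rw [hdc]; exact h)
        (by rw [hdc]; exact hcb) hbd)
  have hab4 : σ a ≠ b := by
    intro hσa
    have hσb : σ b = a := by rw [← hσa, hinv]
    have hNa : ∀ y, G.Adj a y → y = b ∨ y = d := by
      intro y hy
      by_cases h : y = b
      · exact Or.inl h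
      · exact Or.inr (huniq a d y c hda.symm (by rw [hσa]; exact hbd.symm) hy
          (by rw [hσa]; exact h) (by rw [hσa]; exact hcb.symm) hac.symm)
    have hNb : ∀ y, G.Adj b y → y = a ∨ y = c := by
      intro y hy
      by_cases h : y = a
      · exact Or.inl h
      · exact Or.inr (huniq b c y d hcb.symm (by rw [hσb]; exact hac.symm) hy
          (by rw [hσb]; exact h) (by rw [hσb]; exact hda.symm) hbd.symm)
    have huniv : ({a, b, c, d} : Finset V) = Finset.univ := by
      refine eq_univ_of_closed hG.1 (Finset.mem_insert_self _ _) ?_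
      intro v hv x hx
      simp only [Finset.mem_insert, Finset.mem_singleton] at hv ⊢
      rcases hv with rfl | rfl | rfl | rfl
      · have := hNa x hx; tauto
      · have := hNb x hx; tauto
      · have := hNc x hx; tauto
      · have := hNd x hx; tauto
    have := Finset.card_le_four (a := a) (b := b) (c := c) (d := d)
    rw [huniv, Finset.card_univ] at this
    omega
  have hother : ∀ x, x ≠ c → x ≠ d →
      (∀ y, G.Adj x y → y = σ x) ∨ (∀ y, G.Adj (σ x) y → y = x) := by
    intro x hxc hxd
    by_contra hcon
    push Not at hcon
    obtain ⟨⟨y, hxy, hy⟩, ⟨y', hxy', hy'⟩⟩ := hcon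
    have hyy' := hfav x y y' hxy hxy'
    have hσxc : σ x ≠ c := fun h => hxd (by rw [hd, ← h, hinv])
    have hσxd : σ x ≠ d := fun h => hxc (by rw [← hdc, ← h, hinv])
    rcases square_unique hG hac.symm hbd.symm hcd hda hab.symm hcb.symm hy'.symm hy.symm
      (hadj x) hxy' hyy'.symm hxy.symm with h | h | h | h
    · rcases Sym2.eq_iff.1 h with h | h
      · exact hxc h.1
      · exact hxd h.1
    · rcases Sym2.eq_iff.1 h with h | h
      · exact hσxc h.1
      · exact hσxd h.1
    · rcases Sym2.eq_iff.1 h with ⟨h1, h2⟩ | ⟨h1, h2⟩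
      · rw [h2] at hxy; rw [h1] at hxy'
        have e1 := (hNd x hxy.symm).resolve_left hxc
        have e2 := (hNc _ hxy'.symm).resolve_left hσxd
        exact hab4 (by rw [← e1, e2])
      · rw [h2] at hxy; rw [h1] at hxy'
        have e1 := (hNc x hxy.symm).resolve_left hxd
        have e2 := (hNd _ hxy'.symm).resolve_left hσxc
        exact hab4 (by rw [← e2, hinv, e1])
    · rcases Sym2.eq_iff.1 h with h | h
      · exact hxd h.2
      · exact hxc h.2
  have hnac : ¬ G.Adj a c := by
    intro h
    rcases hNc a h.symm with h | h
    · exact hda.ne h.symm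
    · exact hab.ne h.symm
  have hcb' : c ≠ b := hcb.ne
  -- the graph with `a` reattached from `d` to `c`
  have hG₁ : Unicyclic (move G a d c) := by
    refine ⟨move_connected hG.1 hac (Adj.reachable ?_), ?_⟩
    · rw [deleteEdges_adj]
      refine ⟨hcd, fun h => ?_⟩
      rcases Sym2.eq_iff.1 h with h | h
      · exact hac h.1.symm
      · exact hcd.ne h.1
    · rw [move_ncard hac hda.symm hnac, hG.2]
  have hIA : ∀ x, IA G Finset.univ x = IA (move G a d c) Finset.univ x := by
    intro x
    obtain ⟨h1, h2⟩ := IA_move hac hda.symm hnac x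
    rw [h1, h2, IA_insert_isolated G (by simp), IA_insert_isolated G (by simp [hda.symm])]
    · intro u hu hdu
      simp only [Finset.mem_filter, Finset.mem_univ, true_and] at hu
      rcases hNd u hdu with h | h
      · exact hu.2.2 h
      · exact hu.1 h
    · intro u hu hcu
      simp only [Finset.mem_filter, Finset.mem_univ, true_and] at hu
      rcases hNc u hcu with rfl | rfl
      · exact hu.2.1 hda.symm
      · exact hu.2.1 hab.symm
  have hσa : σ a ≠ d := fun h => hac (by rw [← hinv a, h, hdc])
  have hadj₁ : ∀ v, (move G a d c).Adj v (σ v) := by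
    intro v
    rw [move_adj]
    refine Or.inl ⟨hadj v, fun h => ?_⟩
    rcases Sym2.eq_iff.1 h with ⟨h1, h2⟩ | ⟨h1, h2⟩
    · exact hσa (h1 ▸ h2)
    · rw [h1, hdc] at h2; exact hac h2.symm
  have hdleaf : ∀ y, (move G a d c).Adj d y → y = c := by
    intro y hy
    by_cases hya : y = a
    · subst hya
      rw [adj_comm, move_adj_left hac] at hy
      rcases hy with hy | hy
      · exact absurd rfl hy.2
      · exact absurd hy hcd.ne'
    · rw [move_adj_of_ne hda.ne hya] at hy
      exact (hNd y hy).resolve_right hya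
  have hsame : ∀ v, v ≠ a → v ≠ c → ∀ y, (move G a d c).Adj v y → G.Adj v y := by
    intro v hva hvc y hy
    rw [move_adj] at hy
    rcases hy with hy | hy
    · exact hy.1
    · rcases Sym2.eq_iff.1 hy.1 with h | h
      · exact absurd h.1 hva
      · exact absurd h.1 hvc
  have hleaf₁ : ∀ v, (∀ y, (move G a d c).Adj v y → y = σ v) ∨
      (∀ y, (move G a d c).Adj (σ v) y → y = v) := by
    intro v
    by_cases hvc : v = c
    · subst hvc; exact Or.inr hdleaf
    by_cases hvd : v = d
    · left; rw [hvd, hdc]; exact hdleaf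
    have hσvc : σ v ≠ c := fun h => hvd (by rw [hd, ← h, hinv])
    rcases hother v hvc hvd with h | h
    · left
      -- `a` itself is not a leaf, as it is adjacent to `d`
      have hva : v ≠ a := by
        rintro rfl
        exact hσa (h d hda.symm).symm
      exact fun y hy => h y (hsame v hva hvc y hy)
    · right
      have hva : σ v ≠ a := by
        intro h'
        exact hvd (h d (by rw [h']; exact hda.symm)).symm
      exact fun y hy => h y (hsame _ hva hσvc y hy)
  obtain ⟨U, _, H, h1, h2, ⟨φ⟩⟩ := exists_corona_iso hV hn hG₁ hinv hadj₁ hleaf₁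
  exact ⟨U, _, H, h1, h2, fun x => (hIA x).trans (IA_univ_iso φ x).symm⟩

lemma Unicyclic_exists_adj [Fintype V] {H : SimpleGraph V} (hH : Unicyclic H) :
    ∃ u v, H.Adj u v := by
  have := hH.1.nonempty
  have h : H.edgeSet.Nonempty := by
    rw [← Set.ncard_pos (Set.toFinite _), hH.2]; exact Fintype.card_pos
  obtain ⟨e, he⟩ := h
  induction e with
  | _ u v => exact ⟨u, v, he⟩

end WellCoveredUnicyclic

open WellCoveredUnicyclic in
/-- If `G` is a connected well-covered unicyclic graph of order `2n` (`n ≥ 3`),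
then `ξ(C_n*) ≤ ξ(G) ≤ ξ(U_n*)`. -/
theorem stmt9 {V : Type*} [Fintype V] (n : ℕ) (hn : 3 ≤ n) (G : SimpleGraph V)
    (hcard : Fintype.card V = 2 * n) (hG : Unicyclic G) (hwc : WellCovered G) :
    xi (corona (cycleGraph n)) ≤ xi G ∧ xi G ≤ xi (corona (Ugraph n)) := by
  obtain ⟨U, _, H, hH, hU, hIA⟩ := exists_corona_IA hcard hn hG hwc
  obtain ⟨m, rfl⟩ : ∃ m, n = m + 3 := ⟨n - 3, by omega⟩
  obtain ⟨u, v, huv⟩ := Unicyclic_exists_adj hH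
  have hIA' : IA G Finset.univ = IA (corona H) Finset.univ := funext hIA
  constructor
  · refine xi_le_xi ⟨-1, ?_⟩ fun x hx hp => ?_
    · refine IA_corona_neg_one (u := 0) (v := 1) ?_
      rw [cycleGraph_adj]
      simp
    · rw [hIA'] at hp
      refine corona_pos huv (fun y hy hpy t h1 h2 => ?_) hx hp
      rw [IA_cycleGraph]
      exact (hpy t h1 h2).trans_le
        (IA_le_cycle hU _ H hH.1 hH.2 rfl t h2 (hpy.mono h1))
  · refine xi_le_xi ⟨-1, by rw [hIA, IA_corona_neg_one huv]⟩ fun x hx hp => ?_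
    rw [hIA']
    refine corona_pos ((Ugraph_adj_zero (1 : Fin (m + 3))).2 (by simp)) (fun y hy hpy t h1 h2 => ?_)
      hx hp
    have hpu : Pos (uPoly m) y := fun s hs hs0 => by rw [← IA_Ugraph]; exact hpy s hs hs0
    exact (hpu t h1 h2).trans_le (uPoly_le_IA m U H hH.1 hH.2 hU t h2 (hpu.mono h1))
end

section
/- Let n ≥ 5 be odd and let G be a connected well-covered unicyclic graph of order n. Then G ⪯ M_n. -/
/-!
Write `I(S)` for the independence polynomial of the subgraph of `G` induced by `S`.

*Structure.*  In a well-covered graph without isolated vertices every independent set `T` satisfies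
`|T| ≤ |N(T)|` (`hall_of_wellCovered`).  Unicyclic graphs of odd order with this Hall condition form
a class that can be built up recursively: such a graph either has no leaf, and then is a cycle, or
it arises from a smaller graph `S'` of the class by attaching a path `u - s - l` of length two at a
vertex `u` of `S'` (`exists_attach`).

*Comparison.*  Attaching a path gives `I(S) = (1 + x) I(S') + x I(S' - u)`, while
`I(M_{2m+5}) = (1 + x) I(M_{2m+3}) + x (1 + 2x) ^ (m + 1)`.  As `x ≤ 0`, the lower bound
`I(M_{2m+3}) ≤ I(S)` propagates once `I(S - u) ≤ (1 + 2x) ^ (m + 1)` is known for every vertex `u`.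
Proving this upper bound when `u` is the support vertex `s` requires in turn
`(1 + x) I(S) ≤ (1 + 2x) ^ (m + 2)`; the three inequalities are proved by simultaneous induction in
`main_bounds`.  The induction works at points `x` such that `I(M_{2m+3}) > 0` on `[x, 0]`.  There
`I(S')` is positive on `[x, 0]` by the lower bound, hence so is the polynomial of every induced
subgraph (`J_pos_subset`), and deleting vertices can only increase the value (`J_anti`).

*Cycles.*  For cycles the three bounds follow from the linear recursions for the polynomials of
paths and cycles.  Orders three and five are direct; from order seven on, positivity of
`I(M_{2m+3})` on `[x, 0]` forces `x ≥ -1/4`, where the recursions stay positive and decreasing.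

*Endpoint.*  Every `y` in `(ξ(M_n), 0]` is such a point, and the inequality at `ξ(M_n)` itself
follows by continuity.
-/

open Polynomial SimpleGraph

namespace WCU

/-! ### Independence polynomials of induced subgraphs -/

section Poly

variable {V : Type*}

open Classical in
/-- The independence polynomial, evaluated at `x`, of the subgraph of `G` induced by `S`. -/
noncomputable def J (G : SimpleGraph V) (S : Finset V) (x : ℝ) : ℝ :=
  ∑ T ∈ S.powerset, if IsIndepFinset G T then x ^ T.card else 0

variable {G : SimpleGraph V}

lemma eval_indepPoly [Fintype V] (G : SimpleGraph V) (x : ℝ) :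
    (indepPoly G).eval x = J G Finset.univ x := by
  classical
  unfold indepPoly J
  rw [Polynomial.eval_finsetSum, Finset.powerset_univ]
  refine Finset.sum_congr rfl fun T _ => ?_
  split_ifs <;> simp

lemma continuous_J (G : SimpleGraph V) (S : Finset V) : Continuous (J G S) := by
  classical
  unfold J
  refine continuous_finsetSum _ fun T _ => ?_
  split_ifs <;> fun_prop

lemma J_empty (G : SimpleGraph V) (x : ℝ) : J G ∅ x = 1 := by
  simp [J, IsIndepFinset]

variable [DecidableEq V] [DecidableRel G.Adj]

/-- The vertex recursion `I(G) = I(G - v) + x I(G - N[v])`. -/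
lemma J_insert {S : Finset V} {v : V} (hv : v ∉ S) (x : ℝ) :
    J G (insert v S) x = J G S x + x * J G (S.filter fun w => ¬ G.Adj v w) x := by
  classical
  unfold J
  rw [Finset.sum_powerset_insert hv]
  congr 1
  rw [← Finset.sum_filter, ← Finset.sum_filter, Finset.mul_sum]
  have hset : S.powerset.filter (fun T => IsIndepFinset G (insert v T))
      = (S.filter fun w => ¬ G.Adj v w).powerset.filter (fun T => IsIndepFinset G T) := by
    ext T
    simp only [Finset.mem_filter, Finset.mem_powerset]
    constructor
    · rintro ⟨hT, hi⟩
      refine ⟨fun w hw => Finset.mem_filter.2 ⟨hT hw, ?_⟩, fun a ha b hb => ?_⟩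
      · exact hi v (Finset.mem_insert_self _ _) w (Finset.mem_insert_of_mem hw)
      · exact hi a (Finset.mem_insert_of_mem ha) b (Finset.mem_insert_of_mem hb)
    · rintro ⟨hT, hi⟩
      refine ⟨fun w hw => (Finset.mem_filter.1 (hT hw)).1, fun a ha b hb => ?_⟩
      rcases Finset.mem_insert.1 ha with rfl | ha' <;> rcases Finset.mem_insert.1 hb with rfl | hb'
      · exact G.irrefl
      · exact (Finset.mem_filter.1 (hT hb')).2
      · exact fun h => (Finset.mem_filter.1 (hT ha')).2 h.symm
      · exact hi a ha' b hb'
  rw [hset]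
  refine Finset.sum_congr rfl fun T hT => ?_
  have hvT : v ∉ T := fun h =>
    hv (Finset.mem_filter.1 (Finset.mem_powerset.1 (Finset.mem_filter.1 hT).1 h)).1
  rw [Finset.card_insert_of_notMem hvT, pow_succ']

lemma J_at_zero (S : Finset V) : J G S 0 = 1 := by
  classical
  induction S using Finset.induction_on with
  | empty => exact J_empty G 0
  | insert v S hv ih => rw [J_insert hv, ih]; ring

/-- A positive polynomial on `[x, 0]` stays positive there after a vertex is deleted.  Otherwise,
at the last zero `z` of `I(G - v)` all subgraphs of `G - v` have nonnegative value (induction and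
continuity), so `I(G, z) = z I(G - N[v], z) ≤ 0`. -/
lemma J_pos_subset (S : Finset V) : ∀ x : ℝ, (∀ y ∈ Set.Icc x 0, 0 < J G S y) →
    ∀ T ⊆ S, ∀ y ∈ Set.Icc x 0, 0 < J G T y := by
  induction S using Finset.strongInduction with
  | H S ih =>
    intro x hx T hT y hy
    by_cases hTS : T = S
    · exact hTS ▸ hx y hy
    obtain ⟨v, hvS, hvT⟩ := Finset.exists_of_ssubset (hT.ssubset_of_ne hTS)
    have hss : S.erase v ⊂ S := Finset.erase_ssubset hvS
    have hTsub : T ⊆ S.erase v := fun w hw => Finset.mem_erase.2 ⟨fun h => hvT (h ▸ hw), hT hw⟩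
    have hrec := J_insert (G := G) (Finset.notMem_erase v S)
    rw [Finset.insert_erase hvS] at hrec
    refine ih _ hss x ?_ T hTsub y hy
    by_contra! hcon
    obtain ⟨y0, hy0, hneg⟩ := hcon
    let Z : Set ℝ := Set.Icc y0 0 ∩ {y | J G (S.erase v) y ≤ 0}
    have hZc : IsCompact Z :=
      isCompact_Icc.inter_right (isClosed_le (continuous_J G _) continuous_const)
    have hZn : Z.Nonempty := ⟨y0, ⟨le_rfl, hy0.2⟩, hneg⟩
    obtain ⟨z, hz, hmax⟩ := hZc.exists_isGreatest hZn
    have h2 : J G (S.erase v) z ≤ 0 := hz.2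
    have hz0 : z < 0 := by
      rcases lt_or_eq_of_le hz.1.2 with h | h
      · exact h
      · rw [h, J_at_zero] at h2
        linarith
    have hnn : 0 ≤ J G ((S.erase v).filter fun w => ¬ G.Adj v w) z := by
      refine ge_of_tendsto ((continuous_J G _).continuousWithinAt (s := Set.Ioi z)).tendsto ?_
      filter_upwards [Ioc_mem_nhdsGT hz0] with t ht
      refine (ih _ hss t (fun w hw => ?_) _ (Finset.filter_subset _ _) t ⟨le_rfl, ht.2⟩).le
      by_contra hle
      have : w ≤ z := hmax ⟨⟨hz.1.1.trans (ht.1.le.trans hw.1), hw.2⟩, not_lt.1 hle⟩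
      linarith [ht.1, hw.1]
    have h1 := hx z ⟨hy0.1.trans hz.1.1, hz0.le⟩
    rw [hrec] at h1
    nlinarith

/-- Where all induced subgraphs have positive value, deleting vertices increases the value. -/
lemma J_anti {S A B : Finset V} {x : ℝ} (hx : x ≤ 0) (hpos : ∀ T ⊆ S, 0 < J G T x)
    (hAB : A ⊆ B) (hB : B ⊆ S) : J G B x ≤ J G A x := by
  induction B using Finset.strongInduction with
  | H B ih =>
    by_cases hBA : A = B
    · rw [hBA]
    obtain ⟨v, hvB, hvA⟩ := Finset.exists_of_ssubset (hAB.ssubset_of_ne hBA)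
    have hrec := J_insert (G := G) (Finset.notMem_erase v B) x
    rw [Finset.insert_erase hvB] at hrec
    have h1 := ih _ (Finset.erase_ssubset hvB)
      (fun w hw => Finset.mem_erase.2 ⟨fun h => hvA (h ▸ hw), hAB hw⟩)
      ((Finset.erase_subset _ _).trans hB)
    have h2 := hpos ((B.erase v).filter fun w => ¬ G.Adj v w)
      ((Finset.filter_subset _ _).trans ((Finset.erase_subset _ _).trans hB))
    nlinarith

end Poly

/-! ### Polynomials of paths, cycles and `M_n` as real functions -/

/-- The independence polynomial of the graph `M_{2m+3}`, as a function (see `J_Mgraph`). -/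
def M (m : ℕ) (x : ℝ) : ℝ := (1 + 2 * x) ^ (m + 1) + x * (1 + x) ^ m

/-- The independence polynomial of the path on `k` vertices. -/
def pth (x : ℝ) : ℕ → ℝ
  | 0 => 1
  | 1 => 1 + x
  | k + 2 => pth x (k + 1) + x * pth x k

/-- The independence polynomial of the cycle on `k + 2` vertices (`k ≥ 1`), extended to `k = 0`
by the same recursion. -/
def cyc (x : ℝ) : ℕ → ℝ
  | 0 => 1 + 2 * x
  | 1 => 1 + 3 * x
  | k + 2 => cyc x (k + 1) + x * cyc x k

lemma cyc_eq (x : ℝ) (k : ℕ) : cyc x (k + 1) = pth x (k + 2) + x * pth x k := by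
  have : cyc x (k + 1) = pth x (k + 2) + x * pth x k ∧
      cyc x (k + 2) = pth x (k + 3) + x * pth x (k + 1) := by
    induction k with
    | zero => simp only [cyc, pth]; constructor <;> ring
    | succ k ih =>
      refine ⟨ih.2, ?_⟩
      rw [show cyc x (k + 1 + 2) = cyc x (k + 2) + x * cyc x (k + 1) from rfl, ih.1, ih.2]
      simp only [pth]
      ring
  exact this.1

section Real

variable {x : ℝ}

lemma pth_pos (hx : -(1 / 4) ≤ x) (k : ℕ) : 0 < pth x k ∧ pth x k ≤ 2 * pth x (k + 1) := by
  induction k with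
  | zero => simp only [pth]; constructor <;> linarith
  | succ k ih =>
    rw [show pth x (k + 1 + 1) = pth x (k + 1) + x * pth x k from rfl]
    constructor <;> nlinarith [ih.1, ih.2]

lemma cyc_pos (hx : -(1 / 4) ≤ x) (k : ℕ) : 0 < cyc x k ∧ cyc x k ≤ 2 * cyc x (k + 1) := by
  induction k with
  | zero => simp only [cyc]; constructor <;> linarith
  | succ k ih =>
    rw [show cyc x (k + 1 + 1) = cyc x (k + 1) + x * cyc x k from rfl]
    constructor <;> nlinarith [ih.1, ih.2]

lemma cyc_step (x : ℝ) (k : ℕ) : cyc x (k + 3) = (1 + x) * cyc x (k + 1) + x * cyc x k := by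
  rw [show cyc x (k + 3) = cyc x (k + 2) + x * cyc x (k + 1) from rfl,
    show cyc x (k + 2) = cyc x (k + 1) + x * cyc x k from rfl]
  ring

lemma cyc_add_two_le (hx : -(1 / 4) ≤ x) (hx0 : x ≤ 0) (k : ℕ) :
    cyc x (k + 2) ≤ (1 + 2 * x) * cyc x k := by
  rcases k with _ | k
  · simp only [cyc]; nlinarith
  · rw [show cyc x (k + 1 + 2) = cyc x (k + 3) from rfl, cyc_step]
    have h : cyc x (k + 1) ≤ cyc x k := by
      rcases k with _ | k
      · simp only [cyc]; linarith
      · rw [show cyc x (k + 1 + 1) = cyc x (k + 1) + x * cyc x k from rfl]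
        nlinarith [(cyc_pos hx k).1]
    nlinarith

lemma pth_add_two_le (hx : -(1 / 4) ≤ x) (hx0 : x ≤ 0) (k : ℕ) :
    pth x (k + 2) ≤ (1 + 2 * x) * pth x k := by
  rcases k with _ | k
  · simp only [pth]; nlinarith
  · have h : pth x (k + 1) ≤ pth x k := by
      rcases k with _ | k
      · simp only [pth]; linarith
      · rw [show pth x (k + 1 + 1) = pth x (k + 1) + x * pth x k from rfl]
        nlinarith [(pth_pos hx k).1]
    rw [show pth x (k + 1 + 2) = pth x (k + 1) + x * pth x k + x * pth x (k + 1) from rfl]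
    nlinarith

lemma cyc_even_le (hx : -(1 / 4) ≤ x) (hx0 : x ≤ 0) (m : ℕ) :
    cyc x (2 * m) ≤ (1 + 2 * x) ^ (m + 1) := by
  induction m with
  | zero => simp [cyc]
  | succ m ih =>
    have := cyc_add_two_le hx hx0 (2 * m)
    rw [show 2 * (m + 1) = 2 * m + 2 by ring, pow_succ']
    nlinarith

lemma M_succ (m : ℕ) (x : ℝ) : M (m + 1) x = (1 + x) * M m x + x * (1 + 2 * x) ^ (m + 1) := by
  unfold M; ring

lemma M_le_cyc_quarter (hx : -(1 / 4) ≤ x) (hx0 : x ≤ 0) (m : ℕ) : M m x ≤ cyc x (2 * m + 1) := by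
  induction m with
  | zero => simp only [M, cyc]; ring_nf; rfl
  | succ m ih =>
    rw [show 2 * (m + 1) + 1 = 2 * m + 3 by ring, cyc_step, M_succ]
    have := cyc_even_le hx hx0 m
    nlinarith

/-- The polynomial of `M_{2m+3}` is positive on all of `[x, 0]`. -/
def MPos (m : ℕ) (x : ℝ) : Prop := ∀ y ∈ Set.Icc x 0, 0 < M m y

lemma MPos.mono {m : ℕ} {y : ℝ} (h : MPos m x) (hxy : x ≤ y) : MPos m y :=
  fun z hz => h z ⟨hxy.trans hz.1, hz.2⟩

lemma MPos.gt_half {m : ℕ} (h : MPos m x) : -(1 / 2) < x := by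
  by_contra hle
  have h1 := h (-(1 / 2)) ⟨not_lt.1 hle, by norm_num⟩
  have h2 : (0 : ℝ) < (1 / 2) ^ m := by positivity
  have h3 : M m (-(1 / 2)) = -(1 / 2) * (1 / 2) ^ m := by
    unfold M
    rw [show (1 + 2 * -(1 / 2) : ℝ) = 0 by norm_num, show (1 + -(1 / 2) : ℝ) = 1 / 2 by norm_num]
    simp
  rw [h3] at h1
  linarith

lemma MPos.pred {m : ℕ} (h : MPos (m + 1) x) : MPos m x := by
  intro y hy
  have h1 := h y hy
  have h2 := (h.mono hy.1).gt_half
  have h3 : 0 < (1 + y) ^ m := pow_pos (by linarith) _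
  have h5 : M (m + 1) y = (1 + 2 * y) * M m y - (-y) * (-y) * (1 + y) ^ m := by
    unfold M; ring
  rw [h5] at h1
  have h6 : 0 < (1 + 2 * y) * M m y := by nlinarith [mul_nonneg (mul_self_nonneg y) h3.le]
  exact pos_of_mul_pos_right h6 (by linarith)

/-- From `M_7` on, the positivity interval lies inside `[-1/4, 0]`: it shrinks with `m`, and the
polynomial of `M_7` is negative at `-1/4`. -/
lemma MPos.ge_quarter {m : ℕ} (h : MPos (m + 2) x) : -(1 / 4) ≤ x := by
  by_contra hlt
  have h2 : MPos 2 x := by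
    induction m with
    | zero => exact h
    | succ m ih => exact ih h.pred
  have := h2 (-(1 / 4)) ⟨(not_le.1 hlt).le, by norm_num⟩
  norm_num [M] at this

lemma M_le_cyc {m : ℕ} (hx0 : x ≤ 0) (h : MPos m x) : M m x ≤ cyc x (2 * m + 1) := by
  rcases m with _ | _ | m
  · simp only [M, cyc]; ring_nf; rfl
  · simp only [M, cyc]; ring_nf; rfl
  · exact M_le_cyc_quarter h.ge_quarter hx0 _

lemma pth_even_le {m : ℕ} (hx0 : x ≤ 0) (h : MPos m x) :
    pth x (2 * m + 2) ≤ (1 + 2 * x) ^ (m + 1) := by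
  rcases m with _ | _ | m
  · simp only [pth]; ring_nf; rfl
  · simp only [pth]; ring_nf; nlinarith [sq_nonneg x]
  · have hx := h.ge_quarter
    have : ∀ k : ℕ, pth x (2 * k) ≤ (1 + 2 * x) ^ k := by
      intro k
      induction k with
      | zero => simp [pth]
      | succ k ih =>
        have := pth_add_two_le hx hx0 (2 * k)
        rw [show 2 * (k + 1) = 2 * k + 2 by ring, pow_succ']
        nlinarith
    exact this (m + 2 + 1)

lemma cyc_odd_le {m : ℕ} (hx0 : x ≤ 0) (h : MPos m x) :
    (1 + x) * cyc x (2 * m + 1) ≤ (1 + 2 * x) ^ (m + 2) := by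
  have hh := h.gt_half
  rcases m with _ | _ | m
  · simp only [cyc]; ring_nf; nlinarith [sq_nonneg x]
  · simp only [cyc]; ring_nf; nlinarith [mul_nonneg (mul_self_nonneg x) (by linarith : 0 ≤ 2 + 3 * x)]
  · have hx := h.ge_quarter
    have : ∀ k : ℕ, (1 + x) * cyc x (2 * k + 1) ≤ (1 + 2 * x) ^ (k + 2) := by
      intro k
      induction k with
      | zero => simp only [cyc]; ring_nf; nlinarith [sq_nonneg x]
      | succ k ih =>
        have h1 := cyc_add_two_le hx hx0 (2 * k + 1)
        rw [show 2 * (k + 1) + 1 = 2 * k + 1 + 2 by ring, show k + 1 + 2 = (k + 2) + 1 from rfl,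
          pow_succ']
        calc (1 + x) * cyc x (2 * k + 1 + 2) ≤ (1 + x) * ((1 + 2 * x) * cyc x (2 * k + 1)) :=
              mul_le_mul_of_nonneg_left h1 (by linarith)
          _ = (1 + 2 * x) * ((1 + x) * cyc x (2 * k + 1)) := by ring
          _ ≤ _ := mul_le_mul_of_nonneg_left ih (by linarith)
    exact this (m + 2)

end Real


/-! ### Unicyclic induced subgraphs -/

section Structure

variable {V : Type*}

/-- The neighbours of `v` inside `S`. -/
def nb (G : SimpleGraph V) [DecidableRel G.Adj] (S : Finset V) (v : V) : Finset V :=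
  S.filter (G.Adj v)

/-- The subgraph of `G` induced by `S` is connected and unicyclic.  Connectedness is expressed
through cuts, and the number of edges through the degree sum. -/
structure UniOn (G : SimpleGraph V) [DecidableRel G.Adj] (S : Finset V) : Prop where
  nonempty : S.Nonempty
  cut : ∀ A ⊆ S, A.Nonempty → A ≠ S → ∃ a ∈ A, ∃ b ∈ S, b ∉ A ∧ G.Adj a b
  sum : ∑ v ∈ S, (nb G S v).card = 2 * S.card

/-- Hall's condition for the independent sets of the subgraph induced by `S`. -/
def HallOn [DecidableEq V] (G : SimpleGraph V) [DecidableRel G.Adj] (S : Finset V) : Prop :=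
  ∀ T ⊆ S, IsIndepFinset G T → T.card ≤ (T.biUnion (nb G S)).card

variable {G : SimpleGraph V} [DecidableRel G.Adj] {S : Finset V}

lemma mem_nb {v w : V} : w ∈ nb G S v ↔ w ∈ S ∧ G.Adj v w := by simp [nb]

lemma UniOn.card_eq_two (h : UniOn G S) (h2 : ∀ v ∈ S, 2 ≤ (nb G S v).card) :
    ∀ v ∈ S, (nb G S v).card = 2 := by
  have h1 : ∑ v ∈ S, 2 = ∑ v ∈ S, (nb G S v).card := by
    rw [h.sum, Finset.sum_const, smul_eq_mul, mul_comm]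
  exact fun v hv => ((Finset.sum_eq_sum_iff_of_le h2).1 h1 v hv).symm

variable [DecidableEq V]

lemma UniOn.one_le (h : UniOn G S) {v : V} (hv : v ∈ S) : 1 ≤ (nb G S v).card := by
  by_cases hS : {v} = S
  · have := h.sum
    subst hS
    simp [nb, Finset.filter_singleton] at this
  · obtain ⟨a, ha, b, hb, -, hab⟩ := h.cut {v} (by simpa using hv) ⟨v, by simp⟩ hS
    obtain rfl := Finset.mem_singleton.1 ha
    exact Finset.card_pos.2 ⟨b, mem_nb.2 ⟨hb, hab⟩⟩

lemma UniOn.remove_leaves (h : UniOn G S) {L : Finset V} (hL : L ⊆ S)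
    (hleaf : ∀ l ∈ L, (nb G S l).card = 1) (hind : IsIndepFinset G L) (hne : (S \ L).Nonempty) :
    UniOn G (S \ L) := by
  refine ⟨hne, ?_, ?_⟩
  · intro A hA hAne hAS
    have hA1 : ∀ a ∈ A, a ∈ S ∧ a ∉ L := fun a ha => Finset.mem_sdiff.1 (hA ha)
    -- the cut `A`, enlarged by the leaves hanging on it
    obtain ⟨a, ha, b, hb, hbA, hab⟩ := h.cut (A ∪ L.filter fun l => ∃ a ∈ A, G.Adj l a)
      (Finset.union_subset (fun a ha => (hA1 a ha).1) ((Finset.filter_subset _ _).trans hL))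
      (hAne.mono Finset.subset_union_left) (by
        intro hEq
        apply hAS
        refine hA.antisymm fun w hw => ?_
        rw [← hEq] at hw
        simp only [Finset.mem_sdiff, Finset.mem_union, Finset.mem_filter] at hw
        tauto)
    simp only [Finset.mem_union, Finset.mem_filter, not_or, not_and, not_exists] at ha hbA
    rcases ha with ha | ⟨haL, c, hcA, hac⟩
    · refine ⟨a, ha, b, Finset.mem_sdiff.2 ⟨hb, fun hbL => ?_⟩, hbA.1, hab⟩
      exact hbA.2 hbL a ha hab.symm
    · exfalso
      have := Finset.card_le_one.1 (hleaf a haL).le b (mem_nb.2 ⟨hb, hab⟩) c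
        (mem_nb.2 ⟨(hA1 c hcA).1, hac⟩)
      exact hbA.1 (this ▸ hcA)
  · have hsplit : ∀ v, (nb G S v).card = (nb G (S \ L) v).card + (nb G L v).card := by
      intro v
      rw [← Finset.card_union_of_disjoint]
      · congr 1
        ext w
        simp only [mem_nb, Finset.mem_union, Finset.mem_sdiff]
        have := @hL w
        tauto
      · rw [Finset.disjoint_left]
        simp only [mem_nb, Finset.mem_sdiff]
        tauto
    have hdc : ∑ v ∈ S \ L, (nb G L v).card = ∑ l ∈ L, (nb G (S \ L) l).card := by
      have := Finset.sum_card_bipartiteAbove_eq_sum_card_bipartiteBelow (s := S \ L) (t := L) G.Adj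
      simp only [Finset.bipartiteAbove, Finset.bipartiteBelow] at this
      simpa only [nb, G.adj_comm] using this
    have hLn : ∀ l ∈ L, (nb G (S \ L) l).card = 1 := by
      intro l hl
      have h0 : nb G L l = ∅ := by
        rw [Finset.eq_empty_iff_forall_notMem]
        intro w hw
        exact hind l hl w (mem_nb.1 hw).1 (mem_nb.1 hw).2
      have := hsplit l
      rw [hleaf l hl, h0] at this
      simpa using this.symm
    have h1 := h.sum
    rw [← Finset.sum_sdiff hL, Finset.sum_congr rfl hleaf,
      Finset.sum_congr rfl (fun v _ => hsplit v), Finset.sum_add_distrib, hdc,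
      Finset.sum_congr rfl hLn] at h1
    have h2 := Finset.card_sdiff_add_card_eq_card hL
    simp only [Finset.sum_const, smul_eq_mul, mul_one] at h1
    omega

/-- `c` lists the vertices of `S` in cyclic order, `S` inducing a cycle of length `n + 3`. -/
structure CycEnum (G : SimpleGraph V) (S : Finset V) (n : ℕ) (c : ℕ → V) : Prop where
  inj : Set.InjOn c (Finset.range (n + 3))
  image : (Finset.range (n + 3)).image c = S
  adj : ∀ i j, i < j → j < n + 3 → (G.Adj (c i) (c j) ↔ j = i + 1 ∨ (i = 0 ∧ j = n + 2))

lemma UniOn.exists_cycEnum [Fintype V] (h : UniOn G S) (h2 : ∀ v ∈ S, 2 ≤ (nb G S v).card)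
    {u : V} (hu : u ∈ S) : ∃ n c, CycEnum G S n c ∧ c 0 = u := by
  have hd := h.card_eq_two h2
  let H : SimpleGraph V :=
    { Adj := fun a b => a ∈ S ∧ b ∈ S ∧ G.Adj a b
      symm := ⟨fun a b hab => ⟨hab.2.1, hab.1, hab.2.2.symm⟩⟩
      loopless := ⟨fun a ha => G.irrefl ha.2.2⟩ }
  have hset : ∀ v ∈ S, H.neighborSet v = nb G S v := by
    intro v hv
    ext w
    simp [H, nb, hv]
  have hcyc : H.IsCycles := by
    rintro v ⟨w, hw⟩
    have hv : v ∈ S := hw.1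
    rw [hset v hv, Set.ncard_coe_finset, hd v hv]
  have hun : (H.neighborSet u).Nonempty := by
    rw [hset u hu]
    exact Finset.card_pos.1 (h.one_le hu)
  obtain ⟨p, hp, hverts⟩ := hcyc.exists_cycle_toSubgraph_verts_eq_connectedComponentSupp
    (c := H.connectedComponentMk u) (v := u) rfl hun
  have hsupp : ∀ w, w ∈ p.support ↔ w ∈ S := by
    intro w
    rw [← p.mem_verts_toSubgraph, hverts]
    let A : Finset V := Finset.univ.filter fun w => w ∈ (H.connectedComponentMk u).supp
    have hAS : A ⊆ S := by
      intro w hw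
      have hr : H.Reachable w u := by simpa [A] using hw
      obtain ⟨q⟩ := hr
      cases q with
      | nil => exact hu
      | cons hadj _ => exact hadj.1
    have huA : u ∈ A := by simp [A]
    have hA : A = S := by
      by_contra hne
      obtain ⟨a, ha, b, hb, hbA, hab⟩ := h.cut A hAS ⟨u, huA⟩ hne
      apply hbA
      have hr : H.Reachable a u := by simpa [A] using ha
      have hadj : H.Adj b a := ⟨hb, hAS ha, hab.symm⟩
      have : H.Reachable b u := hadj.reachable.trans hr
      simpa [A] using this
    rw [← hA]
    simp [A]
  obtain ⟨n, hn⟩ : ∃ n, p.length = n + 3 := ⟨p.length - 3, by have := hp.three_le_length; omega⟩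
  have hinj : ∀ i j, i < n + 3 → j < n + 3 → p.getVert i = p.getVert j → i = j := by
    intro i j hi hj hij
    exact hp.getVert_injOn' (by simp only [Set.mem_ofPred_eq]; omega)
      (by simp only [Set.mem_ofPred_eq]; omega) hij
  have hstep : ∀ i, i < n + 3 → H.Adj (p.getVert i) (p.getVert (i + 1)) :=
    fun i hi => p.adj_getVert_succ (by omega)
  have hlast : p.getVert (n + 3) = p.getVert 0 := by
    rw [← hn, p.getVert_length, p.getVert_zero]
  refine ⟨n, p.getVert, ⟨?_, ?_, ?_⟩, p.getVert_zero⟩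
  · intro i hi j hj hij
    exact hinj i j (by simpa using hi) (by simpa using hj) hij
  · ext w
    rw [← hsupp, SimpleGraph.Walk.mem_support_iff_exists_getVert]
    simp only [Finset.mem_image, Finset.mem_range]
    constructor
    · rintro ⟨i, hi, hiw⟩
      exact ⟨i, hiw, by omega⟩
    · rintro ⟨i, hi, hle⟩
      rcases Nat.lt_or_ge i (n + 3) with hlt | hge
      · exact ⟨i, hlt, hi⟩
      · obtain rfl : i = n + 3 := by omega
        exact ⟨0, by omega, by rw [← hlast, hi]⟩
  · intro i j hij hj
    have two : ∀ a b v, v ∈ S → a ≠ b → H.Adj v a → H.Adj v b → ∀ w ∈ S, G.Adj v w →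
        w = a ∨ w = b := by
      intro a b v hv hab ha hb w hw hvw
      have hsub : ({a, b} : Finset V) ⊆ nb G S v := by
        intro z hz
        rcases Finset.mem_insert.1 hz with rfl | hz
        · exact mem_nb.2 ⟨ha.2.1, ha.2.2⟩
        · obtain rfl := Finset.mem_singleton.1 hz
          exact mem_nb.2 ⟨hb.2.1, hb.2.2⟩
      have heq := Finset.eq_of_subset_of_card_le hsub (by rw [hd v hv, Finset.card_pair hab])
      have : w ∈ ({a, b} : Finset V) := heq ▸ mem_nb.2 ⟨hw, hvw⟩
      simpa using this
    constructor
    · intro hadj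
      have hjS : p.getVert j ∈ S := (hsupp _).1 (p.getVert_mem_support j)
      rcases i with _ | i
      · have hl := hstep (n + 2) (by omega)
        rw [hlast] at hl
        rcases two (p.getVert 1) (p.getVert (n + 2)) _ hl.2.1
          (fun he => by have := hinj _ _ (by omega) (by omega) he; omega)
          (hstep 0 (by omega)) hl.symm _ hjS hadj with he | he
        · left; exact hinj _ _ hj (by omega) he
        · right; exact ⟨rfl, hinj _ _ hj (by omega) he⟩
      · have hl := hstep i (by omega)
        rcases two (p.getVert (i + 1 + 1)) (p.getVert i) _ hl.2.1
          (fun he => by have := hinj _ _ (by omega) (by omega) he; omega)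
          (hstep (i + 1) (by omega)) hl.symm _ hjS hadj with he | he
        · left; exact hinj _ _ hj (by omega) he
        · have := hinj _ _ hj (by omega) he
          omega
    · rintro (rfl | ⟨rfl, rfl⟩)
      · exact (hstep i (by omega)).2.2
      · have hl := hstep (n + 2) (by omega)
        rw [hlast] at hl
        exact hl.2.2.symm

end Structure

/-! ### Cycles -/

section Cycle

variable {V : Type*} [DecidableEq V] {G : SimpleGraph V} {S : Finset V}
  {n : ℕ} {c : ℕ → V}

lemma CycEnum.card (h : CycEnum G S n c) : S.card = n + 3 := by
  rw [← h.image, Finset.card_image_of_injOn h.inj, Finset.card_range]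

lemma CycEnum.eq_of (h : CycEnum G S n c) {i j : ℕ} (hi : i < n + 3) (hj : j < n + 3)
    (hij : c i = c j) : i = j :=
  h.inj (by simpa using hi) (by simpa using hj) hij

/-- A set of cycle vertices missing `c 0` contains an independent set of at least half its size:
one of the two parity classes. -/
lemma CycEnum.exists_half (h : CycEnum G S n c) {R : Finset V} (hR : R ⊆ S) (h0 : c 0 ∉ R) :
    ∃ I ⊆ R, IsIndepFinset G I ∧ R.card ≤ 2 * I.card := by
  have hpar : ∀ r : ℕ, IsIndepFinset G
      (R ∩ ((Finset.range (n + 3)).filter fun i => i % 2 = r).image c) := by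
    have aux : ∀ i j, i < j → j < n + 3 → i % 2 = j % 2 → c i ∈ R → ¬ G.Adj (c i) (c j) := by
      intro i j hij hj hm hi hadj
      rw [h.adj i j hij hj] at hadj
      have : i ≠ 0 := fun he => h0 (he ▸ hi)
      omega
    intro r u hu v hv hadj
    simp only [Finset.mem_inter, Finset.mem_image, Finset.mem_filter, Finset.mem_range] at hu hv
    obtain ⟨huR, i, ⟨hi, hir⟩, rfl⟩ := hu
    obtain ⟨hvR, j, ⟨hj, hjr⟩, rfl⟩ := hv
    rcases lt_trichotomy i j with hlt | rfl | hlt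
    · exact aux i j hlt hj (by omega) huR hadj
    · exact G.irrefl hadj
    · exact aux j i hlt hi (by omega) hvR hadj.symm
  have hcov : R ⊆ (R ∩ ((Finset.range (n + 3)).filter fun i => i % 2 = 0).image c) ∪
      (R ∩ ((Finset.range (n + 3)).filter fun i => i % 2 = 1).image c) := by
    intro w hw
    have hwS := hR hw
    rw [← h.image] at hwS
    obtain ⟨i, hi, rfl⟩ := Finset.mem_image.1 hwS
    rw [← Finset.inter_union_distrib_left, ← Finset.image_union]
    refine Finset.mem_inter.2 ⟨hw, Finset.mem_image_of_mem _ ?_⟩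
    simp only [Finset.mem_union, Finset.mem_filter]
    rcases Nat.mod_two_eq_zero_or_one i with hm | hm
    · exact Or.inl ⟨hi, hm⟩
    · exact Or.inr ⟨hi, hm⟩
  have hcard := (Finset.card_le_card hcov).trans (Finset.card_union_le _ _)
  rcases le_total (R ∩ ((Finset.range (n + 3)).filter fun i => i % 2 = 0).image c).card
    (R ∩ ((Finset.range (n + 3)).filter fun i => i % 2 = 1).image c).card with hle | hle
  · exact ⟨_, Finset.inter_subset_left, hpar 1, by omega⟩
  · exact ⟨_, Finset.inter_subset_left, hpar 0, by omega⟩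

lemma CycEnum.erase_eq (h : CycEnum G S n c) :
    S.erase (c 0) = (Finset.Ico 1 (1 + (n + 2))).image c := by
  ext w
  rw [← h.image]
  simp only [Finset.mem_erase, Finset.mem_image, Finset.mem_range, Finset.mem_Ico]
  constructor
  · rintro ⟨hw, i, hi, rfl⟩
    have : i ≠ 0 := fun h0 => hw (by rw [h0])
    exact ⟨i, by omega, rfl⟩
  · rintro ⟨i, hi, rfl⟩
    refine ⟨fun he => ?_, i, by omega, rfl⟩
    have := h.eq_of (by omega) (by omega) he
    omega

variable [DecidableRel G.Adj]

lemma CycEnum.J_path (h : CycEnum G S n c) (x : ℝ) {a : ℕ} (ha : 1 ≤ a) :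
    ∀ k, a + k ≤ n + 3 → J G ((Finset.Ico a (a + k)).image c) x = pth x k
  | 0, _ => by simp [J_empty, pth]
  | 1, _ => by
    rw [show (Finset.Ico a (a + 1)).image c = insert (c a) ∅ by simp,
      J_insert (Finset.notMem_empty _)]
    simp [J_empty, pth]
  | k + 2, hk => by
    have h1 : (Finset.Ico a (a + (k + 2))).image c
        = insert (c (a + k + 1)) ((Finset.Ico a (a + (k + 1))).image c) := by
      rw [← Finset.image_insert]
      congr 1
      ext i
      simp only [Finset.mem_Ico, Finset.mem_insert]
      omega
    have h2 : c (a + k + 1) ∉ (Finset.Ico a (a + (k + 1))).image c := by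
      intro hmem
      obtain ⟨i, hi, hic⟩ := Finset.mem_image.1 hmem
      rw [Finset.mem_Ico] at hi
      have := h.eq_of (by omega) (by omega) hic
      omega
    have h3 : ((Finset.Ico a (a + (k + 1))).image c).filter (fun w => ¬ G.Adj (c (a + k + 1)) w)
        = (Finset.Ico a (a + k)).image c := by
      ext w
      simp only [Finset.mem_filter, Finset.mem_image, Finset.mem_Ico]
      constructor
      · rintro ⟨⟨i, hi, rfl⟩, hadj⟩
        rw [G.adj_comm, h.adj i (a + k + 1) (by omega) (by omega)] at hadj
        exact ⟨i, by omega, rfl⟩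
      · rintro ⟨i, hi, rfl⟩
        refine ⟨⟨i, by omega, rfl⟩, ?_⟩
        rw [G.adj_comm, h.adj i (a + k + 1) (by omega) (by omega)]
        omega
    rw [h1, J_insert h2, h3, h.J_path x ha (k + 1) (by omega), h.J_path x ha k (by omega)]
    rfl

lemma CycEnum.J_erase (h : CycEnum G S n c) (x : ℝ) : J G (S.erase (c 0)) x = pth x (n + 2) := by
  rw [h.erase_eq, h.J_path x le_rfl _ (by omega)]

lemma CycEnum.J_eq (h : CycEnum G S n c) (x : ℝ) : J G S x = cyc x (n + 1) := by
  have h0 : c 0 ∈ S := by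
    rw [← h.image]
    exact Finset.mem_image_of_mem _ (by simp)
  have h3 : (S.erase (c 0)).filter (fun w => ¬ G.Adj (c 0) w)
      = (Finset.Ico 2 (2 + n)).image c := by
    rw [h.erase_eq]
    ext w
    simp only [Finset.mem_filter, Finset.mem_image, Finset.mem_Ico]
    constructor
    · rintro ⟨⟨i, hi, rfl⟩, hadj⟩
      rw [h.adj 0 i (by omega) (by omega)] at hadj
      exact ⟨i, by omega, rfl⟩
    · rintro ⟨i, hi, rfl⟩
      refine ⟨⟨i, by omega, rfl⟩, ?_⟩
      rw [h.adj 0 i (by omega) (by omega)]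
      omega
  have hrec := J_insert (G := G) (Finset.notMem_erase (c 0) S) x
  rw [Finset.insert_erase h0, h3, h.J_erase, h.J_path x (by omega) n (by omega)] at hrec
  rw [hrec, cyc_eq]

end Cycle

/-! ### Attached paths and the induction -/

section Attach

variable {V : Type*} [DecidableEq V] {G : SimpleGraph V} [DecidableRel G.Adj] {S : Finset V}

/-- `S` arises from `S'` by attaching the path `u - s - l` of length two at `u ∈ S'`. -/
structure Attach (G : SimpleGraph V) (S S' : Finset V) (l s u : V) : Prop where
  eq : S = insert l (insert s S')
  hl : l ∉ insert s S'
  hs : s ∉ S'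
  hu : u ∈ S'
  adj_ls : G.Adj l s
  adj_l : ∀ w ∈ S', ¬ G.Adj l w
  adj_s : ∀ w ∈ S', (G.Adj s w ↔ w = u)

lemma Attach.J_sub {S' : Finset V} {l s u : V} (h : Attach G S S' l s u) {A : Finset V}
    (hA : A ⊆ S') (x : ℝ) : J G (insert l (insert s A)) x =
      (1 + x) * J G A x + x * J G (A.erase u) x := by
  have h1 : l ∉ insert s A := fun hm => h.hl (Finset.insert_subset_insert _ hA hm)
  have h2 : s ∉ A := fun hm => h.hs (hA hm)
  have h3 : (insert s A).filter (fun w => ¬ G.Adj l w) = A := by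
    rw [Finset.filter_insert, if_neg (not_not.2 h.adj_ls), Finset.filter_eq_self]
    exact fun w hw => h.adj_l w (hA hw)
  have h4 : A.filter (fun w => ¬ G.Adj s w) = A.erase u := by
    ext w
    simp only [Finset.mem_filter, Finset.mem_erase]
    constructor
    · rintro ⟨hw, hn⟩
      exact ⟨fun he => hn ((h.adj_s w (hA hw)).2 he), hw⟩
    · rintro ⟨hn, hw⟩
      exact ⟨hw, fun ha => hn ((h.adj_s w (hA hw)).1 ha)⟩
  rw [J_insert h1, h3, J_insert h2, h4]
  ring

lemma Attach.J_erase_leaf {S' : Finset V} {l s u : V} (h : Attach G S S' l s u) (x : ℝ) :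
    J G (insert s S') x = J G S' x + x * J G (S'.erase u) x := by
  have h4 : S'.filter (fun w => ¬ G.Adj s w) = S'.erase u := by
    ext w
    simp only [Finset.mem_filter, Finset.mem_erase]
    constructor
    · rintro ⟨hw, hn⟩
      exact ⟨fun he => hn ((h.adj_s w hw).2 he), hw⟩
    · rintro ⟨hn, hw⟩
      exact ⟨hw, fun ha => hn ((h.adj_s w hw).1 ha)⟩
  rw [J_insert h.hs, h4]

lemma Attach.J_erase_support {S' : Finset V} {l s u : V} (h : Attach G S S' l s u) (x : ℝ) :
    J G (insert l S') x = (1 + x) * J G S' x := by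
  rw [J_insert (fun hm => h.hl (Finset.mem_insert_of_mem hm)), Finset.filter_eq_self.2 h.adj_l]
  ring

lemma HallOn.two_mul_card_le (hH : HallOn G S) {T : Finset V} (hT : T ⊆ S)
    (hi : IsIndepFinset G T) : 2 * T.card ≤ S.card := by
  have h1 := hH T hT hi
  have h2 : T.biUnion (nb G S) ⊆ S \ T := by
    intro w hw
    obtain ⟨t, ht, hw⟩ := Finset.mem_biUnion.1 hw
    exact Finset.mem_sdiff.2 ⟨(mem_nb.1 hw).1, fun hwT => hi t ht w hwT (mem_nb.1 hw).2⟩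
  have h3 := Finset.card_le_card h2
  have h4 := Finset.card_sdiff_add_card_eq_card hT
  omega

/-- A graph of the class with a leaf is obtained by attaching a path of length two to a smaller
graph of the class.  The leaves of the graph left after deleting all leaves supply the attaching
path; if there are none, that graph is a cycle, and the deleted leaves together with half of the
cycle vertices not next to them violate Hall's condition. -/
lemma exists_attach [Fintype V] (h : UniOn G S) (hH : HallOn G S) (hodd : Odd S.card)
    {l₀ : V} (hl₀ : l₀ ∈ S) (hleaf₀ : (nb G S l₀).card = 1) :
    ∃ S' l s u, Attach G S S' l s u ∧ UniOn G S' ∧ HallOn G S' := by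
  set L := S.filter fun l => (nb G S l).card = 1 with hLdef
  have hLS : L ⊆ S := Finset.filter_subset _ _
  have hL1 : ∀ l ∈ L, (nb G S l).card = 1 := fun l hl => (Finset.mem_filter.1 hl).2
  have huniq : ∀ l ∈ L, ∀ a ∈ S, ∀ b ∈ S, G.Adj l a → G.Adj l b → a = b :=
    fun l hl a ha b hb hla hlb => Finset.card_le_one.1 (hL1 l hl).le a (mem_nb.2 ⟨ha, hla⟩) b
      (mem_nb.2 ⟨hb, hlb⟩)
  have hind : IsIndepFinset G L := by
    intro a ha b hb hab
    by_cases hS : {a, b} = S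
    · rw [← hS, Finset.card_pair hab.ne] at hodd
      exact absurd hodd (by decide)
    · obtain ⟨p, hp, q, hq, hqn, hpq⟩ := h.cut {a, b} (by
        intro w hw
        rcases Finset.mem_insert.1 hw with rfl | hw
        · exact hLS ha
        · exact (Finset.mem_singleton.1 hw) ▸ hLS hb) ⟨a, by simp⟩ hS
      apply hqn
      rcases Finset.mem_insert.1 hp with rfl | hp
      · rw [huniq p ha q hq b (hLS hb) hpq hab]; simp
      · obtain rfl := Finset.mem_singleton.1 hp
        rw [huniq p hb q hq a (hLS ha) hpq hab.symm]; simp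
  have hl₀L : l₀ ∈ L := Finset.mem_filter.2 ⟨hl₀, hleaf₀⟩
  obtain ⟨s₀, hs₀⟩ := Finset.card_pos.1 (h.one_le hl₀)
  rw [mem_nb] at hs₀
  have hs₀H : s₀ ∈ S \ L := Finset.mem_sdiff.2 ⟨hs₀.1, fun hs => hind l₀ hl₀L s₀ hs hs₀.2⟩
  have hK := h.remove_leaves hLS hL1 hind ⟨s₀, hs₀H⟩
  by_cases hcase : ∀ v ∈ S \ L, 2 ≤ (nb G (S \ L) v).card
  · exfalso
    obtain ⟨n, c, hc, hc0⟩ := hK.exists_cycEnum hcase hs₀H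
    set Q := L.biUnion (nb G S) with hQ
    have hQcard : Q.card ≤ L.card := by
      refine Finset.card_biUnion_le.trans ?_
      rw [Finset.sum_congr rfl hL1]
      simp
    obtain ⟨I, hIR, hI, hIcard⟩ := hc.exists_half (R := (S \ L) \ Q) Finset.sdiff_subset (by
      rw [hc0]
      intro hm
      exact (Finset.mem_sdiff.1 hm).2
        (Finset.mem_biUnion.2 ⟨l₀, hl₀L, mem_nb.2 ⟨hs₀.1, hs₀.2⟩⟩))
    have hIm : ∀ w ∈ I, w ∈ S ∧ w ∉ L ∧ w ∉ Q := by
      intro w hw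
      have := hIR hw
      simp only [Finset.mem_sdiff] at this
      tauto
    have hLI : ∀ a ∈ L, ∀ b ∈ I, ¬ G.Adj a b := fun a ha b hb hab =>
      (hIm b hb).2.2 (Finset.mem_biUnion.2 ⟨a, ha, mem_nb.2 ⟨(hIm b hb).1, hab⟩⟩)
    have hT : IsIndepFinset G (L ∪ I) := by
      intro a ha b hb hab
      rcases Finset.mem_union.1 ha with ha | ha <;> rcases Finset.mem_union.1 hb with hb | hb
      · exact hind a ha b hb hab
      · exact hLI a ha b hb hab
      · exact hLI b hb a ha hab.symm
      · exact hI a ha b hb hab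
    have h1 := hH.two_mul_card_le (Finset.union_subset hLS fun w hw => (hIm w hw).1) hT
    rw [Finset.card_union_of_disjoint (Finset.disjoint_left.2 fun w hw hw' => (hIm w hw').2.1 hw)]
      at h1
    have h2 := Finset.card_sdiff_add_card_eq_card hLS
    have h3 := Finset.le_card_sdiff Q (S \ L)
    obtain ⟨r, hr⟩ := hodd
    omega
  · push Not at hcase
    obtain ⟨s, hsH, hs1⟩ := hcase
    have hs1 : (nb G (S \ L) s).card = 1 := by
      have := hK.one_le hsH
      omega
    obtain ⟨u, hu⟩ := Finset.card_eq_one.1 hs1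
    obtain ⟨hsS, hsL⟩ := Finset.mem_sdiff.1 hsH
    have hmemu : ∀ w, (w ∈ S ∧ w ∉ L) ∧ G.Adj s w ↔ w = u := by
      intro w
      rw [← Finset.mem_sdiff, ← mem_nb, hu, Finset.mem_singleton]
    -- `s` has degree at least two in `S`, so one of its neighbours was a leaf
    obtain ⟨l, hlL, hsl⟩ : ∃ l ∈ L, G.Adj s l := by
      by_contra! hno
      apply hsL
      refine Finset.mem_filter.2 ⟨hsS, ?_⟩
      rw [← hs1]
      congr 1
      ext w
      simp only [mem_nb, Finset.mem_sdiff]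
      exact ⟨fun hw => ⟨⟨hw.1, fun hwL => hno w hwL hw.2⟩, hw.2⟩, fun hw => ⟨hw.1.1, hw.2⟩⟩
    -- two leaves with the common neighbour `s` would violate Hall's condition
    have hlonly : ∀ l' ∈ L, G.Adj s l' → l' = l := by
      intro l' hl' hsl'
      by_contra hne
      have h1 := hH {l', l} (by
        intro w hw
        rcases Finset.mem_insert.1 hw with rfl | hw
        · exact hLS hl'
        · exact (Finset.mem_singleton.1 hw) ▸ hLS hlL) (by
        intro a ha b hb
        refine hind a ?_ b ?_
        · rcases Finset.mem_insert.1 ha with rfl | ha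
          · exact hl'
          · exact (Finset.mem_singleton.1 ha) ▸ hlL
        · rcases Finset.mem_insert.1 hb with rfl | hb
          · exact hl'
          · exact (Finset.mem_singleton.1 hb) ▸ hlL)
      rw [Finset.card_pair hne] at h1
      have h2 : ({l', l} : Finset V).biUnion (nb G S) ⊆ {s} := by
        intro w hw
        simp only [Finset.mem_biUnion, Finset.mem_insert, Finset.mem_singleton, mem_nb] at hw ⊢
        obtain ⟨t, rfl | rfl, hwS, htw⟩ := hw
        · exact huniq t hl' w hwS s hsS htw hsl'.symm
        · exact huniq t hlL w hwS s hsS htw hsl.symm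
      have h3 := Finset.card_le_card h2
      rw [Finset.card_singleton] at h3
      omega
    obtain ⟨⟨huS, huL⟩, hsu⟩ := (hmemu u).2 rfl
    have hlS := hLS hlL
    have hls : l ≠ s := hsl.ne'
    have hus : u ≠ s := hsu.ne'
    have hul : u ≠ l := fun he => huL (he ▸ hlL)
    have hS' : ∀ w, w ∈ (S \ {l}) \ {s} ↔ w ∈ S ∧ w ≠ l ∧ w ≠ s := by
      intro w; simp only [Finset.mem_sdiff, Finset.mem_singleton]; tauto
    have hsing : ∀ v : V, IsIndepFinset G {v} := by
      intro v a ha b hb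
      rw [Finset.mem_singleton.1 ha, Finset.mem_singleton.1 hb]
      exact G.irrefl
    have hatt : Attach G S ((S \ {l}) \ {s}) l s u := by
      refine ⟨?_, ?_, ?_, ?_, hsl.symm, ?_, ?_⟩
      · ext w
        simp only [Finset.mem_insert, hS']
        by_cases h1 : w = l
        · simp [h1, hlS]
        · by_cases h2 : w = s
          · simp [h2, hsS]
          · simp [h1, h2]
      · simp [hls]
      · simp
      · exact (hS' u).2 ⟨huS, hul, hus⟩
      · intro w hw hlw
        obtain ⟨hwS, -, hws⟩ := (hS' w).1 hw
        exact hws (huniq l hlL w hwS s hsS hlw hsl.symm)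
      · intro w hw
        obtain ⟨hwS, hwl, hws⟩ := (hS' w).1 hw
        constructor
        · intro hsw
          exact (hmemu w).1 ⟨⟨hwS, fun hwL => hwl (hlonly w hwL hsw)⟩, hsw⟩
        · rintro rfl
          exact hsu
    have hK1 : UniOn G (S \ {l}) := h.remove_leaves (by simpa using hlS)
      (by simpa using hL1 l hlL) (hsing l) ⟨s, by simp [hsS, hls.symm]⟩
    have hnbs : nb G (S \ {l}) s = {u} := by
      ext w
      rw [mem_nb, Finset.mem_singleton, Finset.mem_sdiff, Finset.mem_singleton]
      constructor
      · rintro ⟨⟨hwS, hwl⟩, hsw⟩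
        exact (hmemu w).1 ⟨⟨hwS, fun hwL => hwl (hlonly w hwL hsw)⟩, hsw⟩
      · rintro rfl
        exact ⟨⟨huS, hul⟩, hsu⟩
    have hK2 : UniOn G ((S \ {l}) \ {s}) := hK1.remove_leaves (by simp [hsS, hls.symm])
      (by simp [hnbs]) (hsing s) ⟨u, hatt.hu⟩
    refine ⟨_, l, s, u, hatt, hK2, ?_⟩
    -- Hall's condition for `T` in the smaller graph is that of `insert l T` in `S`, whose
    -- neighbourhood gains only `s`
    intro T hT hTi
    have hTS : ∀ w ∈ T, w ∈ S ∧ w ≠ l ∧ w ≠ s := fun w hw => (hS' w).1 (hT hw)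
    have hlT : l ∉ T := fun hm => (hTS l hm).2.1 rfl
    have h1 := hH (insert l T) (by
      intro w hw
      rcases Finset.mem_insert.1 hw with rfl | hw
      · exact hlS
      · exact (hTS w hw).1) (by
      intro a ha b hb hab
      rcases Finset.mem_insert.1 ha with ha' | ha' <;>
        rcases Finset.mem_insert.1 hb with hb' | hb'
      · exact G.irrefl (ha' ▸ hb' ▸ hab)
      · exact hatt.adj_l b (hT hb') (ha' ▸ hab)
      · exact hatt.adj_l a (hT ha') (hb' ▸ hab.symm)
      · exact hTi a ha' b hb' hab)
    rw [Finset.card_insert_of_notMem hlT] at h1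
    have h2 : (insert l T).biUnion (nb G S) ⊆ insert s (T.biUnion (nb G ((S \ {l}) \ {s}))) := by
      intro w hw
      obtain ⟨t, ht, hw⟩ := Finset.mem_biUnion.1 hw
      obtain ⟨hwS, htw⟩ := mem_nb.1 hw
      by_cases hws : w = s
      · rw [hws]; exact Finset.mem_insert_self _ _
      rcases Finset.mem_insert.1 ht with ht' | ht'
      · exact absurd (huniq l hlL w hwS s hsS (ht' ▸ htw) hsl.symm) hws
      · refine Finset.mem_insert_of_mem (Finset.mem_biUnion.2 ⟨t, ht', mem_nb.2 ⟨?_, htw⟩⟩)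
        exact (hS' w).2 ⟨hwS, fun hwl => hatt.adj_l t (hT ht') (hwl ▸ htw.symm), hws⟩
    have h3 := (Finset.card_le_card h2).trans (Finset.card_insert_le _ _)
    omega

lemma UniOn.bounds_of_no_leaf {m : ℕ} [Fintype V] (h : UniOn G S)
    (h2 : ∀ v ∈ S, 2 ≤ (nb G S v).card) (hcard : S.card = 2 * m + 3) {x : ℝ} (hx : x ≤ 0)
    (hM : MPos m x) :
    M m x ≤ J G S x ∧ (∀ u ∈ S, J G (S.erase u) x ≤ (1 + 2 * x) ^ (m + 1)) ∧
      (1 + x) * J G S x ≤ (1 + 2 * x) ^ (m + 2) := by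
  have hJ : J G S x = cyc x (2 * m + 1) := by
    obtain ⟨u, hu⟩ := h.nonempty
    obtain ⟨n, c, hc, -⟩ := h.exists_cycEnum h2 hu
    obtain rfl : n = 2 * m := by have := hc.card; omega
    exact hc.J_eq x
  rw [hJ]
  refine ⟨M_le_cyc hx hM, fun u hu => ?_, cyc_odd_le hx hM⟩
  obtain ⟨n, c, hc, hc0⟩ := h.exists_cycEnum h2 hu
  obtain rfl : n = 2 * m := by have := hc.card; omega
  rw [← hc0, hc.J_erase]
  exact pth_even_le hx hM

/-- The inductive comparison.  The upper bounds in the second and third component feed the lower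
bound of the next step, where `I(S) = (1 + x) I(S') + x I(S' - u)` has a negative second term. -/
theorem main_bounds [Fintype V] (m : ℕ) : ∀ S : Finset V, UniOn G S → HallOn G S →
    S.card = 2 * m + 3 → ∀ x ≤ 0, MPos m x →
    M m x ≤ J G S x ∧ (∀ u ∈ S, J G (S.erase u) x ≤ (1 + 2 * x) ^ (m + 1)) ∧
      (1 + x) * J G S x ≤ (1 + 2 * x) ^ (m + 2) := by
  induction m with
  | zero =>
    intro S hU hH hcard x hx hM
    refine UniOn.bounds_of_no_leaf hU (fun v hv => ?_) hcard hx hM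
    by_contra hlt
    obtain ⟨S', l, s, u, hatt, hU', -⟩ := exists_attach hU hH (by rw [hcard]; decide) hv
      (by have := hU.one_le hv; omega)
    -- `S'` would be a single vertex
    have h1 := hatt.eq ▸ hcard
    rw [Finset.card_insert_of_notMem hatt.hl, Finset.card_insert_of_notMem hatt.hs] at h1
    obtain ⟨w, hw⟩ := Finset.card_pos.1 (hU'.one_le hatt.hu)
    obtain ⟨hwS, huw⟩ := mem_nb.1 hw
    exact huw.ne (Finset.card_le_one.1 (by omega) u hatt.hu w hwS)
  | succ m ih =>
    intro S hU hH hcard x hx hM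
    by_cases h2 : ∀ v ∈ S, 2 ≤ (nb G S v).card
    · exact UniOn.bounds_of_no_leaf hU h2 hcard hx hM
    push Not at h2
    obtain ⟨v, hv, hv2⟩ := h2
    obtain ⟨S', l, s, u₀, hatt, hU', hH'⟩ := exists_attach hU hH
      (by rw [hcard]; exact ⟨m + 2, by ring⟩) hv (by have := hU.one_le hv; omega)
    have hcard' : S'.card = 2 * m + 3 := by
      have h1 := hatt.eq ▸ hcard
      rw [Finset.card_insert_of_notMem hatt.hl, Finset.card_insert_of_notMem hatt.hs] at h1
      omega
    have hhalf := hM.gt_half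
    have hpos : ∀ T ⊆ S', 0 < J G T x := fun T hT =>
      J_pos_subset S' x (fun y hy => (hM.pred y hy).trans_le
        (ih S' hU' hH' hcard' y hy.2 (hM.pred.mono hy.1)).1) T hT x ⟨le_rfl, hx⟩
    obtain ⟨i1, i2, i3⟩ := ih S' hU' hH' hcard' x hx hM.pred
    have hJ : J G S x = (1 + x) * J G S' x + x * J G (S'.erase u₀) x := by
      rw [hatt.eq]
      exact hatt.J_sub subset_rfl x
    have hdel : ∀ A ⊆ S', x * J G (A.erase u₀) x ≤ x * J G A x := fun A hA =>
      mul_le_mul_of_nonpos_left (J_anti hx hpos (Finset.erase_subset _ _) hA) hx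
    refine ⟨?_, ?_, ?_⟩
    · rw [M_succ, hJ]
      have := i2 u₀ hatt.hu
      nlinarith
    · intro u hu
      have hsl : s ≠ l := fun he => hatt.hl (he ▸ Finset.mem_insert_self _ _)
      rw [hatt.eq] at hu ⊢
      rcases Finset.mem_insert.1 hu with rfl | hu
      · rw [Finset.erase_insert hatt.hl, hatt.J_erase_leaf]
        linarith [hdel S' subset_rfl]
      rcases Finset.mem_insert.1 hu with rfl | hu
      · rw [Finset.erase_insert_of_ne hsl.symm, Finset.erase_insert hatt.hs,
          hatt.J_erase_support]
        exact i3
      · have hul : l ≠ u := fun he => hatt.hl (he ▸ Finset.mem_insert_of_mem hu)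
        have hus : s ≠ u := fun he => hatt.hs (he ▸ hu)
        rw [Finset.erase_insert_of_ne hul, Finset.erase_insert_of_ne hus,
          hatt.J_sub (Finset.erase_subset _ _), pow_succ']
        have h1 := hdel (S'.erase u) (Finset.erase_subset _ _)
        have h3 := mul_le_mul_of_nonneg_left (i2 u hu) (by linarith : 0 ≤ 1 + 2 * x)
        linarith
    · rw [hJ, pow_succ']
      have h1 := mul_le_mul_of_nonneg_left (hdel S' subset_rfl) (by linarith : 0 ≤ 1 + x)
      have h3 := mul_le_mul_of_nonneg_left i3 (by linarith : 0 ≤ 1 + 2 * x)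
      linarith

end Attach

/-! ### Well-covered graphs satisfy Hall's condition -/

section WellCovered

variable {V : Type*} [Fintype V] {G : SimpleGraph V}

open Classical in
lemma exists_maximal_indep {A : Finset V} (hA : IsIndepFinset G A) :
    ∃ B, A ⊆ B ∧ IsIndepFinset G B ∧ ∀ v ∉ B, ¬ IsIndepFinset G (insert v B) := by
  obtain ⟨B, hB, hmax⟩ := Finset.exists_max_image
    (Finset.univ.filter fun B : Finset V => A ⊆ B ∧ IsIndepFinset G B) Finset.card
    ⟨A, by simpa using hA⟩
  simp only [Finset.mem_filter, Finset.mem_univ, true_and] at hB hmax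
  refine ⟨B, hB.1, hB.2, fun v hv hi => ?_⟩
  have := hmax (insert v B) ⟨hB.1.trans (Finset.subset_insert _ _), hi⟩
  rw [Finset.card_insert_of_notMem hv] at this
  omega

open Classical in
/-- In a well-covered graph without isolated vertices every independent set `T` has at least `|T|`
neighbours.  A maximal independent set `B` through a neighbour of `T` gives
`|T \ B| ≤ |N(T) ∩ B|`, since `(B \ N(T)) ∪ T` is independent; induction covers `T ∩ B`, whose
neighbours avoid `B`. -/
lemma hall_of_wellCovered (hwc : WellCovered G) (hiso : ∀ v, ∃ w, G.Adj v w) :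
    HallOn G Finset.univ := by
  intro T _
  induction T using Finset.strongInduction with
  | H T ih =>
    intro hT
    rcases T.eq_empty_or_nonempty with rfl | ⟨t, ht⟩
    · simp
    obtain ⟨v, hv⟩ := hiso t
    have hsing : IsIndepFinset G {v} := by
      intro a ha b hb
      rw [Finset.mem_singleton.1 ha, Finset.mem_singleton.1 hb]
      exact G.irrefl
    obtain ⟨B, hvB, hB, hBmax⟩ := exists_maximal_indep hsing
    have hvB : v ∈ B := hvB (Finset.mem_singleton_self v)
    set N := T.biUnion (nb G Finset.univ) with hN
    have hmemN : ∀ w, w ∈ N ↔ ∃ a ∈ T, G.Adj a w := by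
      intro w; simp [hN, mem_nb]
    have h1 := ih (T ∩ B) (Finset.inter_subset_left.ssubset_of_ne fun he => by
      have : t ∈ B := (Finset.mem_inter.1 (he.symm ▸ ht)).2
      exact hB t this v hvB hv) (Finset.subset_univ _)
      (fun a ha b hb => hT a (Finset.mem_inter.1 ha).1 b (Finset.mem_inter.1 hb).1)
    have hind : IsIndepFinset G ((B \ N) ∪ T) := by
      intro a ha b hb hab
      simp only [Finset.mem_union, Finset.mem_sdiff, hmemN] at ha hb
      rcases ha with ha | ha <;> rcases hb with hb | hb
      · exact hB a ha.1 b hb.1 hab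
      · exact ha.2 ⟨b, hb, hab.symm⟩
      · exact hb.2 ⟨a, ha, hab⟩
      · exact hT a ha b hb hab
    obtain ⟨C, hC, hCi, hCmax⟩ := exists_maximal_indep hind
    have h2 := (Finset.card_le_card hC).trans (hwc C B hCi hCmax hB hBmax).le
    have h3 : (B \ N).card + (T \ B).card ≤ ((B \ N) ∪ T).card := by
      rw [← Finset.card_union_of_disjoint]
      · exact Finset.card_le_card (Finset.union_subset_union_right Finset.sdiff_subset)
      · exact Finset.disjoint_left.2 fun w hw hw' =>
          (Finset.mem_sdiff.1 hw').2 (Finset.mem_sdiff.1 hw).1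
    have h4 : ((T ∩ B).biUnion (nb G Finset.univ)).card + (B ∩ N).card ≤ N.card := by
      rw [← Finset.card_union_of_disjoint]
      · refine Finset.card_le_card (Finset.union_subset ?_ Finset.inter_subset_right)
        exact Finset.biUnion_subset_biUnion_of_subset_left _ Finset.inter_subset_left
      · refine Finset.disjoint_left.2 fun w hw hw' => ?_
        obtain ⟨a, ha, haw⟩ := Finset.mem_biUnion.1 hw
        exact hB a (Finset.mem_inter.1 ha).2 w (Finset.mem_inter.1 hw').1 (mem_nb.1 haw).2
    have h5 := Finset.card_sdiff_add_card_inter B N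
    have h6 := Finset.card_sdiff_add_card_inter T B
    omega

open Classical in
lemma uniOn_univ (h : Unicyclic G) : UniOn G Finset.univ := by
  obtain ⟨hc, he⟩ := h
  have := hc.nonempty
  refine ⟨Finset.univ_nonempty, ?_, ?_⟩
  · rintro A - ⟨a, ha⟩ hne
    obtain ⟨b, hb⟩ : ∃ b, b ∉ A := by
      by_contra! hall
      exact hne (Finset.eq_univ_iff_forall.2 hall)
    obtain ⟨p⟩ := hc.preconnected a b
    obtain ⟨d, -, hd1, hd2⟩ := p.exists_boundary_dart (A : Set V) ha hb
    exact ⟨d.fst, hd1, d.snd, Finset.mem_univ _, hd2, d.adj⟩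
  · have h1 := G.sum_degrees_eq_twice_card_edges
    rw [Set.ncard_eq_toFinset_card'] at he
    rw [Finset.card_univ, ← he]
    refine Eq.trans ?_ (h1.trans ?_)
    · refine Finset.sum_congr rfl fun v _ => ?_
      rw [← G.card_neighborFinset_eq_degree, G.neighborFinset_eq_filter]
      rfl
    · rfl

end WellCovered

/-! ### The graph `M_n` -/

section MGraph

lemma J_Mgraph (m : ℕ) (x : ℝ) : J (Mgraph (2 * m + 3)) Finset.univ x = M m x := by
  classical
  have hadj : ∀ i j : Fin (2 * m + 3), (Mgraph (2 * m + 3)).Adj i j ↔ i.val ≠ j.val ∧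
      (((i.val = 0 ∧ (j.val ≤ 2 ∨ j.val % 2 = 1)) ∨ (i.val = 1 ∧ j.val = 2) ∨
        (i.val % 2 = 1 ∧ 3 ≤ i.val ∧ j.val = i.val + 1)) ∨
      ((j.val = 0 ∧ (i.val ≤ 2 ∨ i.val % 2 = 1)) ∨ (j.val = 1 ∧ i.val = 2) ∨
        (j.val % 2 = 1 ∧ 3 ≤ j.val ∧ i.val = j.val + 1))) := by
    intro i j
    rw [Mgraph, SimpleGraph.fromRel_adj, ne_eq, Fin.ext_iff]
  -- the first `k` matching edges away from vertex `0`
  have hA : ∀ k, k ≤ m + 1 → J (Mgraph (2 * m + 3))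
      (Finset.univ.filter fun i => 1 ≤ i.val ∧ i.val ≤ 2 * k) x = (1 + 2 * x) ^ k := by
    intro k
    induction k with
    | zero =>
      intro _
      rw [Finset.filter_false_of_mem (fun i _ => by omega), J_empty, pow_zero]
    | succ k ih =>
      intro hk
      have e1 : (Finset.univ.filter fun i : Fin (2 * m + 3) => 1 ≤ i.val ∧ i.val ≤ 2 * (k + 1))
          = insert ⟨2 * k + 2, by omega⟩ (insert ⟨2 * k + 1, by omega⟩
            (Finset.univ.filter fun i : Fin (2 * m + 3) => 1 ≤ i.val ∧ i.val ≤ 2 * k)) := by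
        ext i
        simp only [Finset.mem_filter, Finset.mem_univ, true_and, Finset.mem_insert, Fin.ext_iff]
        omega
      rw [e1, J_insert, J_insert]
      · have e2 : (Finset.filter (fun w => ¬ (Mgraph (2 * m + 3)).Adj ⟨2 * k + 2, by omega⟩ w)
            (insert ⟨2 * k + 1, by omega⟩
            (Finset.univ.filter fun i : Fin (2 * m + 3) => 1 ≤ i.val ∧ i.val ≤ 2 * k)))
            = Finset.univ.filter fun i : Fin (2 * m + 3) => 1 ≤ i.val ∧ i.val ≤ 2 * k := by
          ext i
          simp only [Finset.mem_filter, Finset.mem_univ, true_and, Finset.mem_insert,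
            Fin.ext_iff, hadj]
          omega
        have e3 : (Finset.filter (fun w => ¬ (Mgraph (2 * m + 3)).Adj ⟨2 * k + 1, by omega⟩ w)
            (Finset.univ.filter fun i : Fin (2 * m + 3) => 1 ≤ i.val ∧ i.val ≤ 2 * k))
            = Finset.univ.filter fun i : Fin (2 * m + 3) => 1 ≤ i.val ∧ i.val ≤ 2 * k := by
          ext i
          simp only [Finset.mem_filter, Finset.mem_univ, true_and, hadj]
          omega
        rw [e2, e3, ih (by omega), pow_succ]
        ring
      · simp
      · simp only [Finset.mem_filter, Finset.mem_univ, true_and, Finset.mem_insert, Fin.ext_iff]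
        omega
  -- the first `k` leaves of the attached paths
  have hB : ∀ k, k ≤ m → J (Mgraph (2 * m + 3))
      (Finset.univ.filter fun i => 4 ≤ i.val ∧ i.val ≤ 2 * k + 2 ∧ i.val % 2 = 0) x
        = (1 + x) ^ k := by
    intro k
    induction k with
    | zero =>
      intro _
      rw [Finset.filter_false_of_mem (fun i _ => by omega), J_empty, pow_zero]
    | succ k ih =>
      intro hk
      have e1 : (Finset.univ.filter fun i : Fin (2 * m + 3) =>
            4 ≤ i.val ∧ i.val ≤ 2 * (k + 1) + 2 ∧ i.val % 2 = 0)
          = insert ⟨2 * k + 4, by omega⟩ (Finset.univ.filter fun i : Fin (2 * m + 3) =>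
              4 ≤ i.val ∧ i.val ≤ 2 * k + 2 ∧ i.val % 2 = 0) := by
        ext i
        simp only [Finset.mem_filter, Finset.mem_univ, true_and, Finset.mem_insert, Fin.ext_iff]
        omega
      rw [e1, J_insert]
      · have e3 : (Finset.filter (fun w => ¬ (Mgraph (2 * m + 3)).Adj ⟨2 * k + 4, by omega⟩ w)
            (Finset.univ.filter fun i : Fin (2 * m + 3) =>
              4 ≤ i.val ∧ i.val ≤ 2 * k + 2 ∧ i.val % 2 = 0))
            = Finset.univ.filter fun i : Fin (2 * m + 3) =>
              4 ≤ i.val ∧ i.val ≤ 2 * k + 2 ∧ i.val % 2 = 0 := by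
          ext i
          simp only [Finset.mem_filter, Finset.mem_univ, true_and, hadj]
          omega
        rw [e3, ih (by omega), pow_succ]
        ring
      · simp
  have e1 : (Finset.univ : Finset (Fin (2 * m + 3))) = insert ⟨0, by omega⟩
      (Finset.univ.filter fun i : Fin (2 * m + 3) => 1 ≤ i.val ∧ i.val ≤ 2 * (m + 1)) := by
    ext i
    simp only [Finset.mem_filter, Finset.mem_univ, true_and, Finset.mem_insert, Fin.ext_iff,
      true_iff]
    omega
  have e2 : (Finset.filter (fun w => ¬ (Mgraph (2 * m + 3)).Adj ⟨0, by omega⟩ w)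
      (Finset.univ.filter fun i : Fin (2 * m + 3) => 1 ≤ i.val ∧ i.val ≤ 2 * (m + 1)))
      = Finset.univ.filter fun i : Fin (2 * m + 3) =>
        4 ≤ i.val ∧ i.val ≤ 2 * m + 2 ∧ i.val % 2 = 0 := by
    ext i
    simp only [Finset.mem_filter, Finset.mem_univ, true_and, hadj]
    omega
  rw [e1, J_insert (by simp), e2, hA (m + 1) le_rfl, hB m le_rfl, M]

lemma mpos_of_xi_lt {m : ℕ} {y : ℝ} (hy : xi (Mgraph (2 * m + 3)) < y) : MPos m y := by
  have heval : ∀ z, (indepPoly (Mgraph (2 * m + 3))).eval z = M m z := fun z => by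
    rw [eval_indepPoly, J_Mgraph]
  have hM0 : M m 0 = 1 := by simp [M]
  have hne : indepPoly (Mgraph (2 * m + 3)) ≠ 0 := by
    intro h0
    have := heval 0
    rw [h0, hM0] at this
    simp at this
  have hbdd : BddAbove {x : ℝ | (indepPoly (Mgraph (2 * m + 3))).eval x = 0} :=
    (Polynomial.finite_setOfPred_isRoot hne).bddAbove
  intro z hz
  by_contra hle
  have hcont : ContinuousOn (M m) (Set.Icc z 0) := by
    unfold M
    fun_prop
  obtain ⟨w, hw, hw0⟩ := intermediate_value_Icc hz.2 hcont
    (show (0 : ℝ) ∈ Set.Icc (M m z) (M m 0) from ⟨not_lt.1 hle, by rw [hM0]; exact zero_le_one⟩)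
  have : w ≤ xi (Mgraph (2 * m + 3)) := le_csSup hbdd ((heval w).trans hw0)
  linarith [hw.1, hz.1]

end MGraph

end WCU

/-- If `n ≥ 5` is odd and `G` is a connected well-covered unicyclic graph of
order `n`, then `G ⪯ M_n`. -/
theorem stmt10 {V : Type*} [Fintype V] (n : ℕ) (hn : 5 ≤ n) (hodd : Odd n)
    (G : SimpleGraph V) (hcard : Fintype.card V = n)
    (hG : Unicyclic G) (hwc : WellCovered G) :
    Pre G (Mgraph n) := by
  classical
  obtain ⟨m, rfl⟩ : ∃ m, n = 2 * m + 3 := by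
    obtain ⟨k, hk⟩ := hodd
    exact ⟨k - 1, by omega⟩
  have hU := WCU.uniOn_univ hG
  have hH := WCU.hall_of_wellCovered hwc fun v => by
    obtain ⟨w, hw⟩ := Finset.card_pos.1 (hU.one_le (Finset.mem_univ v))
    exact ⟨w, (WCU.mem_nb.1 hw).2⟩
  intro x hx
  rw [WCU.eval_indepPoly, WCU.eval_indepPoly]
  rcases lt_or_eq_of_le hx.2 with hx0 | rfl
  -- the bound holds to the right of `ξ(M_n)` and passes to the endpoint by continuity
  · refine le_of_tendsto_of_tendsto
      ((WCU.continuous_J _ _).continuousWithinAt (s := Set.Ioi x)).tendsto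
      ((WCU.continuous_J _ _).continuousWithinAt (s := Set.Ioi x)).tendsto ?_
    filter_upwards [Ioc_mem_nhdsGT hx0] with y hy
    rw [WCU.J_Mgraph]
    exact (WCU.main_bounds m Finset.univ hU hH (by rw [Finset.card_univ, hcard]) y hy.2
      (WCU.mpos_of_xi_lt (hx.1.trans_lt hy.1))).1
  · rw [WCU.J_at_zero, WCU.J_at_zero]
end
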